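/- For every natural number N and every compact set K contained in the open unit disc 𝔻 ⊂ ℝ², there exists a constant C₂ = C₂(K, N) > 0 with the following property: whenever u and v are harmonic functions on 𝔻, neither identically zero, such that Z(u) = Z(v) and the number of connected components of 𝔻 ∖ Z(u) is less than N, then sup_{x ∈ K ∖ Z(u)} |∇(u/v)(x)| ≤ C₂ · inf_{x ∈ K ∖ Z(u)} |u(x)/v(x)|, where ∇(u/v) denotes the gradient of the ratio u/v on 𝔻 ∖ Z(v). -/

import Mathlib

open Metric Set Filter

noncomputable section

abbrev En (n : ℕ) : Type := EuclideanSpace ℝ (Fin n)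

/-- The Laplacian of `u` at `x`, computed from the second iterated Fréchet derivative. -/
def laplacianAt {n : ℕ} (u : En n → ℝ) (x : En n) : ℝ :=
  ∑ i : Fin n, iteratedFDeriv ℝ 2 u x ![EuclideanSpace.single i 1, EuclideanSpace.single i 1]

/-- `u` is harmonic on `Ω`: twice continuously differentiable with vanishing Laplacian. -/
def HarmonicOnSet {n : ℕ} (u : En n → ℝ) (Ω : Set (En n)) : Prop :=
  ContDiffOn ℝ 2 u Ω ∧ ∀ x ∈ Ω, laplacianAt u x = 0

/-- The zero set of `u` within `Ω`. -/
def zeroSet {n : ℕ} (u : En n → ℝ) (Ω : Set (En n)) : Set (En n) :=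
  {x ∈ Ω | u x = 0}

/-- The collection of nodal domains of `u` in `Ω`, i.e. the connected components of
`Ω \ Z(u)`. -/
def nodalComponents {n : ℕ} (u : En n → ℝ) (Ω : Set (En n)) : Set (Set (En n)) :=
  {C | ∃ x ∈ Ω \ zeroSet u Ω, C = connectedComponentIn (Ω \ zeroSet u Ω) x}

/-!
On the disc a harmonic function is `u = re F` with `F` holomorphic. A path crossing a nodal line
at a simple zero of `F - i t` joins two nodal domains, and by plane topology a given pair of
nodal domains is joined through at most one such zero; so fewer than `N` nodal domains force `F` to
take all but countably many imaginary values at most `N ^ 2` times. By Bloch's theorem and the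
argument behind Landau's, such an `F` grows in a controlled way, so the functions `F` normalized
by `sup |re F| = 1` on a smaller disc and `F 0` real form a compact family, and limits of them are
not purely imaginary.

Near a point where `re G` vanishes to order `m`, rescaling brings `G` close to `z ^ m` up to an
imaginary constant. Extended to complex arguments `(x, y)`, both `re F` and `re G` are holomorphic,
the zeros in `x` of `re G` are real and simple for generic real `y` and hence zeros of `re F`, and
Cauchy's formula over the circle `|x| = 1`, where `re G` is bounded below, represents the quotient
and bounds it together with its gradient. The bounds are stable under small perturbations. Along a
sequence of counterexamples, converging by compactness, they bound `∇(u / v)` near one limit point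
and `v / u` near the other, a contradiction.
-/

open scoped Topology ComplexConjugate

section PlaneTopology

theorem mul_pos_of_isPreconnected_of_ne_zero {X : Type*} [TopologicalSpace X] {s : Set X}
    (hs : IsPreconnected s) {f : X → ℝ} (hf : ContinuousOn f s) (h0 : ∀ x ∈ s, f x ≠ 0) {x y : X}
    (hx : x ∈ s) (hy : y ∈ s) : 0 < f x * f y := by
  have himage : (f '' s).OrdConnected := (hs.image f hf).ordConnected
  have hzero : (0 : ℝ) ∉ f '' s := fun ⟨z, hz, h⟩ => h0 z hz h
  have hfx := mem_image_of_mem f hx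
  have hfy := mem_image_of_mem f hy
  rcases (h0 x hx).lt_or_gt with hx0 | hx0 <;> rcases (h0 y hy).lt_or_gt with hy0 | hy0
  · exact mul_pos_of_neg_of_neg hx0 hy0
  · exact absurd (himage.out hfx hfy ⟨hx0.le, hy0.le⟩) hzero
  · exact absurd (himage.out hfy hfx ⟨hy0.le, hx0.le⟩) hzero
  · exact mul_pos hx0 hy0

theorem isPreconnected_setOf_one_le_norm : IsPreconnected {z : ℂ | 1 ≤ ‖z‖} := by
  have hsphere : IsPreconnected (sphere (0 : ℂ) 1) :=
    isPreconnected_sphere (by rw [Complex.rank_real_complex]; norm_num) 0 1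
  have himage := (hsphere.prod (isPreconnected_Ici (a := (1 : ℝ)))).image
    (fun p : ℂ × ℝ => (p.2 : ℂ) * p.1) (by fun_prop)
  refine (congrArg IsPreconnected (Subset.antisymm ?_ fun z (hz : 1 ≤ ‖z‖) => ?_)).mp himage
  · rintro _ ⟨⟨a, t⟩, ⟨ha, ht⟩, rfl⟩
    rw [mem_sphere_zero_iff_norm] at ha
    change 1 ≤ ‖(t : ℂ) * a‖
    rw [norm_mul, ha, mul_one, Complex.norm_real]
    exact ht.out.trans (le_abs_self t)
  · have hz0 : z ≠ 0 := norm_pos_iff.mp (one_pos.trans_le hz)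
    have hz0' : (‖z‖ : ℂ) ≠ 0 := Complex.ofReal_ne_zero.mpr (norm_ne_zero_iff.mpr hz0)
    exact ⟨(z / ‖z‖, ‖z‖), ⟨by simp [hz0], hz⟩, mul_div_cancel₀ z hz0'⟩

theorem closure_connectedComponentIn_compl_subset {X : Type*} [TopologicalSpace X]
    [LocallyConnectedSpace X] {E : Set X} (hE : IsClosed E) (a : X) :
    closure (connectedComponentIn Eᶜ a) ⊆ connectedComponentIn Eᶜ a ∪ E := by
  refine fun z hz => or_iff_not_imp_right.mpr fun hzE => ?_
  have hopen : IsOpen (connectedComponentIn Eᶜ z) := hE.isOpen_compl.connectedComponentIn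
  obtain ⟨w, hwz, hwa⟩ := mem_closure_iff.mp hz _ hopen (mem_connectedComponentIn hzE)
  rw [connectedComponentIn_eq hwa, ← connectedComponentIn_eq hwz]
  exact mem_connectedComponentIn hzE

theorem exists_isCompact_isPreconnected_of_connectedComponentIn_eq {X : Type*} [TopologicalSpace X]
    [LocallyPathConnectedSpace X] {S : Set X} (hS : IsOpen S) {x y : X} (hx : x ∈ S) (hy : y ∈ S)
    (h : connectedComponentIn S x = connectedComponentIn S y) :
    ∃ A : Set X, IsCompact A ∧ IsPreconnected A ∧ A ⊆ S ∧ x ∈ A ∧ y ∈ A := by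
  have hpath : IsPathConnected (connectedComponentIn S x) :=
    hS.connectedComponentIn.isConnected_iff_isPathConnected.mp
      (isConnected_connectedComponentIn_iff.mpr hx)
  obtain ⟨γ, hγ⟩ := hpath.joinedIn x (mem_connectedComponentIn hx) y
    (h ▸ mem_connectedComponentIn hy)
  refine ⟨range γ, isCompact_range γ.continuous, isPreconnected_range γ.continuous, ?_,
    ⟨0, γ.source⟩, ⟨1, γ.target⟩⟩
  rintro _ ⟨t, rfl⟩
  exact connectedComponentIn_subset _ _ (hγ t)

theorem sub_div_sub_mem_slitPlane {x y z : ℂ} (h : ‖y - x‖ < ‖z - y‖) :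
    (z - x) / (z - y) ∈ Complex.slitPlane := by
  have hpos : 0 < ‖z - y‖ := (norm_nonneg _).trans_lt h
  have hne : z - y ≠ 0 := norm_pos_iff.mp hpos
  have heq : (z - x) / (z - y) = 1 + (y - x) / (z - y) := by field_simp; ring
  rw [heq]
  exact Complex.mem_slitPlane_of_norm_lt_one (by rwa [norm_div, div_lt_one hpos])

theorem exists_continuousOn_sq_eq_div_of_norm_lt {E : Set ℂ} {x y : ℂ}
    (h : ∀ z ∈ E, ‖y - x‖ < ‖z - y‖) :
    ∃ s : ℂ → ℂ, ContinuousOn s E ∧ ∀ z ∈ E, s z ^ 2 = (z - x) / (z - y) := by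
  refine ⟨fun z => ((z - x) / (z - y)) ^ (1 / 2 : ℂ), ?_, fun z _ => ?_⟩
  · refine ContinuousOn.cpow_const (ContinuousOn.div (by fun_prop) (by fun_prop) fun z hz => ?_)
      fun z hz => sub_div_sub_mem_slitPlane (h z hz)
    exact norm_pos_iff.mp ((norm_nonneg _).trans_lt (h z hz))
  · simp [← Complex.cpow_mul_nat]

theorem exists_continuousOn_sq_eq_div {E G : Set ℂ} (hE : IsClosed E) (hG : IsPreconnected G)
    (hGE : G ⊆ Eᶜ) {a b : ℂ} (ha : a ∈ G) (hb : b ∈ G) :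
    ∃ s : ℂ → ℂ, ContinuousOn s E ∧ ∀ z ∈ E, s z ^ 2 = (z - a) / (z - b) := by
  refine hG.induction₂' (fun a b => ∃ s : ℂ → ℂ, ContinuousOn s E ∧
    ∀ z ∈ E, s z ^ 2 = (z - a) / (z - b)) (fun x hx => ?_) ?_ ha hb
  · obtain ⟨ε, hε, hball⟩ := Metric.isOpen_iff.mp hE.isOpen_compl x (hGE hx)
    filter_upwards [mem_nhdsWithin_of_mem_nhds (ball_mem_nhds x (half_pos hε))] with y hy
    rw [mem_ball, dist_eq_norm] at hy
    have hzx : ∀ z ∈ E, ε ≤ ‖z - x‖ := fun z hz => by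
      by_contra hlt
      exact hball (by rw [mem_ball, dist_eq_norm]; linarith) hz
    refine ⟨exists_continuousOn_sq_eq_div_of_norm_lt fun z hz => ?_,
      exists_continuousOn_sq_eq_div_of_norm_lt fun z hz => ?_⟩
    · linarith [hzx z hz, norm_sub_le_norm_sub_add_norm_sub z y x]
    · linarith [hzx z hz, norm_sub_rev x y]
  · rintro x y w - hy - ⟨s, hs, hs'⟩ ⟨t, ht, ht'⟩
    refine ⟨fun z => s z * t z, hs.mul ht, fun z hz => ?_⟩
    have hzy : z - y ≠ 0 := sub_ne_zero.mpr fun h => hGE hy (h ▸ hz)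
    rw [mul_pow, hs' z hz, ht' z hz, div_mul_div_cancel₀ hzy]

theorem norm_le_of_sq_eq_div_of_re_eq_zero {s z : ℂ} {η : ℝ} (hη : 0 ≤ η)
    (hz : z + η * Complex.I ≠ 0) (hs : s ^ 2 = (z - η * Complex.I) / (z + η * Complex.I))
    (hre : s.re = 0) : ‖z‖ ≤ η := by
  set q : ℝ := s.im ^ 2
  have hq : 0 ≤ q := sq_nonneg _
  have hsq : s ^ 2 = -(q : ℂ) := by
    apply Complex.ext <;> simp [pow_two, hre, q]
  rw [hsq, eq_div_iff hz] at hs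
  have hmul : ((1 + q : ℝ) : ℂ) * z = ((1 - q) * η : ℝ) * Complex.I := by
    push_cast
    linear_combination -hs
  have hnorm : (1 + q) * ‖z‖ = |1 - q| * η := by
    have h := congrArg norm hmul
    rwa [norm_mul, norm_mul, Complex.norm_I, mul_one, Complex.norm_real, Complex.norm_real,
      Real.norm_eq_abs, Real.norm_eq_abs, abs_mul, abs_of_nonneg hη,
      abs_of_pos (by linarith : 0 < 1 + q)] at h
  have hle : |1 - q| ≤ 1 + q := abs_le.mpr ⟨by linarith, by linarith⟩
  exact le_of_mul_le_mul_left (hnorm.trans_le (by gcongr)) (by linarith : 0 < 1 + q)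

theorem re_mul_re_neg_of_sq_eq_div {η : ℝ} (hη : 0 < η) {s : ℝ → ℂ}
    (hcont : ContinuousOn s (Icc (-1) 1))
    (hs : ∀ x ∈ Icc (-1 : ℝ) 1, s x ^ 2 = (x - η * Complex.I) / (x + η * Complex.I)) :
    (s 1).re * (s (-1)).re < 0 := by
  -- `s x * (x + η * I)` is a square root of the positive number `x ^ 2 + η ^ 2`, hence real
  set f : ℝ → ℂ := fun x => s x * (x + η * Complex.I) with hf
  have hf_cont : ContinuousOn f (Icc (-1) 1) := hcont.mul (by fun_prop)
  have hsq : ∀ x ∈ Icc (-1 : ℝ) 1, f x ^ 2 = (x ^ 2 + η ^ 2 : ℝ) := fun x hx => by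
    have hx0 : (x + η * Complex.I : ℂ) ≠ 0 := fun h => hη.ne' (by simpa using congrArg Complex.im h)
    rw [hf, mul_pow, hs x hx, div_mul_eq_mul_div, div_eq_iff hx0]
    push_cast
    linear_combination (-(η : ℂ) ^ 2) * (x + η * Complex.I) * Complex.I_sq
  have hre : ∀ x ∈ Icc (-1 : ℝ) 1, (f x).re ≠ 0 := fun x hx h0 => by
    have h := congrArg Complex.re (hsq x hx)
    rw [pow_two, Complex.mul_re, h0, Complex.ofReal_re] at h
    nlinarith [sq_nonneg x, sq_nonneg (f x).im]
  have him : ∀ x ∈ Icc (-1 : ℝ) 1, (f x).im = 0 := fun x hx => by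
    have h := congrArg Complex.im (hsq x hx)
    rw [pow_two, Complex.mul_im, Complex.ofReal_im] at h
    exact (mul_eq_zero.mp (by linarith : (f x).re * (f x).im = 0)).resolve_left (hre x hx)
  have hs_re : ∀ x ∈ Icc (-1 : ℝ) 1, (x ^ 2 + η ^ 2) * (s x).re = (f x).re * x := fun x hx => by
    have him' := him x hx
    simp only [hf, Complex.mul_re, Complex.mul_im, Complex.add_re, Complex.add_im,
      Complex.ofReal_re, Complex.ofReal_im, Complex.I_re, Complex.I_im] at him' ⊢
    linear_combination η * him'
  have hpos : 0 < (f 1).re * (f (-1)).re :=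
    mul_pos_of_isPreconnected_of_ne_zero isPreconnected_Icc
      (Complex.continuous_re.comp_continuousOn hf_cont) hre (by norm_num) (by norm_num)
  have hright := hs_re 1 (by norm_num)
  have hleft := hs_re (-1) (by norm_num)
  have hprod : (1 + η ^ 2) ^ 2 * ((s 1).re * (s (-1)).re) = -((f 1).re * (f (-1)).re) := by
    linear_combination (1 + η ^ 2) * (s (-1)).re * hright + (f 1).re * hleft
  by_contra! hnonneg
  linarith [mul_nonneg (sq_nonneg (1 + η ^ 2)) hnonneg]

theorem not_continuousOn_sq_eq_div {E : Set ℂ} (hE : IsPreconnected E) (hone : 1 ∈ E)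
    (hneg : -1 ∈ E) {η : ℝ} (hη : 0 < η) (hdisj : ∀ z ∈ E, η < ‖z‖) {s : ℂ → ℂ}
    (hs : ∀ z ∈ E ∪ Complex.ofReal '' Icc (-1) 1,
      s z ^ 2 = (z - η * Complex.I) / (z + η * Complex.I)) :
    ¬ ContinuousOn s (E ∪ Complex.ofReal '' Icc (-1) 1) := by
  intro hcont
  have hpos : 0 < (s 1).re * (s (-1)).re := by
    refine mul_pos_of_isPreconnected_of_ne_zero (f := fun z => (s z).re) hE
      (Complex.continuous_re.comp_continuousOn (hcont.mono subset_union_left))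
      (fun z hz hre => (hdisj z hz).not_ge ?_) hone hneg
    refine norm_le_of_sq_eq_div_of_re_eq_zero hη.le (fun h => (hdisj z hz).ne' ?_)
      (hs z (Or.inl hz)) hre
    simp [eq_neg_of_add_eq_zero_left h, abs_of_pos hη]
  have hneg := re_mul_re_neg_of_sq_eq_div hη (s := fun x => s x)
    (hcont.comp Complex.continuous_ofReal.continuousOn fun x hx => Or.inr (mem_image_of_mem _ hx))
    (fun x hx => hs x (Or.inr (mem_image_of_mem _ hx)))
  simp only [Complex.ofReal_neg, Complex.ofReal_one] at hneg
  exact hpos.not_gt hneg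

theorem notMem_of_isPreconnected_of_crossing {E G : Set ℂ} (hG : IsPreconnected G)
    (hE : IsPreconnected E) (hEc : IsClosed E) (hone : 1 ∈ E) (hneg : -1 ∈ E) {η : ℝ} (hη : 0 < η)
    (hdisj : ∀ z ∈ E, η < ‖z‖) (hGE : G ⊆ (E ∪ Complex.ofReal '' Icc (-1) 1)ᶜ)
    (hmem : η * Complex.I ∈ G) : -(η * Complex.I) ∉ G := fun hmem' => by
  have hclosed : IsClosed (E ∪ Complex.ofReal '' Icc (-1) 1) :=
    hEc.union (isCompact_Icc.image Complex.continuous_ofReal).isClosed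
  obtain ⟨s, hcont, hs⟩ := exists_continuousOn_sq_eq_div hclosed hG hGE hmem hmem'
  exact not_continuousOn_sq_eq_div hE hone hneg hη hdisj (by simpa only [sub_neg_eq_add] using hs)
    hcont

end PlaneTopology

section ZeroCount

/-- The collection of connected components of the set `S`. -/
def componentsIn {X : Type*} [TopologicalSpace X] (S : Set X) : Set (Set X) :=
  {C | ∃ x ∈ S, C = connectedComponentIn S x}

/-- The union of the nodal domains of `re F` in the unit disc. -/
def reNeZero (F : ℂ → ℂ) : Set ℂ := {z ∈ ball 0 1 | (F z).re ≠ 0}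

/-- The points of the unit disc at which `F` does not take a nonzero imaginary value. A compact
subset of it can cross the level line `re F = 0` at zeros of `F` only. -/
def imaginaryFree (F : ℂ → ℂ) : Set ℂ := {z ∈ ball 0 1 | (F z).re = 0 → F z = 0}

variable {F : ℂ → ℂ}

theorem reNeZero_subset_imaginaryFree : reNeZero F ⊆ imaginaryFree F :=
  fun _ hz => ⟨hz.1, fun h => absurd h hz.2⟩

theorem isOpen_reNeZero (hF : ContinuousOn F (ball 0 1)) : IsOpen (reNeZero F) :=
  (Complex.continuous_re.comp_continuousOn hF).isOpen_inter_preimage isOpen_ball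
    isOpen_compl_singleton

theorem norm_add_mul_I_le (x y : ℝ) : ‖(x + y * Complex.I : ℂ)‖ ≤ |x| + |y| := by
  simpa using norm_add_le (x : ℂ) (y * Complex.I)

theorem connectedComponentIn_compl_eq {K : Set ℂ} (hK : K ⊆ ball 0 1) {a b p q : ℂ}
    (hp : p ∈ connectedComponentIn Kᶜ a) (hp1 : 1 ≤ ‖p‖) (hq : q ∈ connectedComponentIn Kᶜ b)
    (hq1 : 1 ≤ ‖q‖) : connectedComponentIn Kᶜ a = connectedComponentIn Kᶜ b := by
  have hsub : {z : ℂ | 1 ≤ ‖z‖} ⊆ connectedComponentIn Kᶜ q :=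
    isPreconnected_setOf_one_le_norm.subset_connectedComponentIn hq1
      fun z (hz : 1 ≤ ‖z‖) hzK => (mem_ball_zero_iff.mp (hK hzK)).not_ge hz
  rw [connectedComponentIn_eq hp, connectedComponentIn_eq hq, connectedComponentIn_eq (hsub hp1)]

theorem exists_re_eq_zero_norm_lt {p : ℂ} {G : Set ℂ} (hopen : 𝓝 (F p) ≤ map F (𝓝 p))
    (hG : G ∈ 𝓝 p) (hre : (F p).re = 0) : ∃ q ∈ G, (F q).re = 0 ∧ ‖F p‖ < ‖F q‖ := by
  have hnorm : ∀ w : ℂ, w.re = 0 → ‖w‖ = |w.im| := fun w hw => by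
    rw [← Complex.abs_im_eq_norm.mpr hw]
  obtain ⟨σ, hσ⟩ : ∃ σ : ℝ, ∀ t > 0, |(F p).im| < |(F p).im + t * σ| := by
    rcases le_total 0 (F p).im with h | h
    · exact ⟨1, fun t ht => by rw [abs_of_nonneg h, abs_of_nonneg (by linarith)]; linarith⟩
    · exact ⟨-1, fun t ht => by rw [abs_of_nonpos h, abs_of_nonpos (by linarith)]; linarith⟩
  have htend : Tendsto (fun t : ℝ => F p + (t * σ : ℝ) * Complex.I) (𝓝[>] 0) (𝓝 (F p)) :=
    (Continuous.tendsto' (by fun_prop) 0 (F p) (by simp)).mono_left nhdsWithin_le_nhds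
  obtain ⟨t, ⟨q, hq, hFq⟩, ht⟩ :=
    ((htend.eventually (hopen (image_mem_map hG))).and self_mem_nhdsWithin).exists
  have hqre : (F q).re = 0 := by simp [hFq, hre]
  refine ⟨q, hq, hqre, ?_⟩
  rw [hnorm _ hre, hnorm _ hqre, hFq]
  simpa using hσ t ht

theorem exists_mem_connectedComponentIn_one_le_norm (hF : ContinuousOn F (ball 0 1))
    (hopen : ∀ z ∈ ball (0 : ℂ) 1, 𝓝 (F z) ≤ map F (𝓝 z)) {E : Set ℂ} (hE : IsCompact E)
    (hEF : E ⊆ imaginaryFree F) {a : ℂ} (haE : a ∉ E) (ha : (F a).re = 0) :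
    ∃ w ∈ connectedComponentIn Eᶜ a, 1 ≤ ‖w‖ := by
  by_contra! hcon
  set G := connectedComponentIn Eᶜ a
  have haG : a ∈ G := mem_connectedComponentIn haE
  have hG : IsOpen G := hE.isClosed.isOpen_compl.connectedComponentIn
  have hGball : G ⊆ ball 0 1 := fun z hz => mem_ball_zero_iff.mpr (hcon z hz)
  have hclosure : closure G ⊆ G ∪ E := closure_connectedComponentIn_compl_subset hE.isClosed a
  have hball : closure G ⊆ ball 0 1 :=
    hclosure.trans (union_subset hGball fun z hz => (hEF hz).1)
  set T := closure G ∩ (fun z => (F z).re) ⁻¹' {0}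
  have haT : a ∈ T := ⟨subset_closure haG, ha⟩
  have hT : IsCompact T :=
    (isCompact_of_isClosed_isBounded isClosed_closure
      (isBounded_ball.subset hball)).of_isClosed_subset
      ((Complex.continuous_re.comp_continuousOn (hF.mono hball)).preimage_isClosed_of_isClosed
        isClosed_closure isClosed_singleton) inter_subset_left
  have hout : ∀ p ∈ T, IsMaxOn (fun z => ‖F z‖) T p → p ∉ G := fun p hp hmax hpG => by
    obtain ⟨q, hqG, hq, hlt⟩ :=
      exists_re_eq_zero_norm_lt (hopen p (hGball hpG)) (hG.mem_nhds hpG) hp.2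
    exact (hmax ⟨subset_closure hqG, hq⟩).not_gt hlt
  -- a maximum point of `‖F‖` on `T` lies in `E`, where `F = 0`; so `F = 0` on all of `T`
  obtain ⟨p, hp, hmax⟩ := hT.exists_isMaxOn ⟨a, haT⟩
    (hF.mono (inter_subset_left.trans hball)).norm
  have hFp : F p = 0 := (hEF ((hclosure hp.1).resolve_left (hout p hp hmax))).2 hp.2
  have hle : ‖F p‖ ≤ ‖F a‖ := by simp [hFp]
  exact hout a haT (fun q hq => le_trans (hmax hq) hle) haG

/-- The disc of centre `z` through `z + 2 * c` is so small that `F` has a zero at `z` and that, in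
the coordinate `w` with `z + c * w`, the real part of `F` has the sign of `w.re` on the double cone
`|w.im| ≤ |w.re|`; thus `z - c` and `z + c` lie on different sides of the level line
`re F = 0` through `z`. -/
structure IsCrossing (F : ℂ → ℂ) (z c : ℂ) : Prop where
  ne_zero : c ≠ 0
  eq_zero : F z = 0
  mem_ball : ∀ w : ℂ, ‖w‖ ≤ 2 → z + c * w ∈ ball (0 : ℂ) 1
  re_mul_re_pos : ∀ w : ℂ, ‖w‖ ≤ 2 → |w.im| ≤ |w.re| → w.re ≠ 0 → 0 < w.re * (F (z + c * w)).re

theorem exists_isCrossing {z d : ℂ} (hz : z ∈ ball (0 : ℂ) 1) (hF : HasDerivAt F d z)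
    (h0 : F z = 0) (hd : d ≠ 0) : ∃ c, IsCrossing F z c := by
  have hnorm : 0 < ‖d‖ := norm_pos_iff.mpr hd
  have hlin := (hasDerivAt_iff_isLittleO_nhds_zero.mp hF).def (by positivity : 0 < ‖d‖ / 4)
  have hball : ∀ᶠ v in 𝓝 (0 : ℂ), z + v ∈ ball (0 : ℂ) 1 :=
    (continuous_const_add z).continuousAt.eventually_mem (by simpa using isOpen_ball.mem_nhds hz)
  obtain ⟨δ, hδ, hδF⟩ := Metric.eventually_nhds_iff.mp (hlin.and hball)
  obtain ⟨ε, hε, hεδ⟩ : ∃ ε > 0, ε * 2 < δ * ‖d‖ := ⟨δ * ‖d‖ / 4, by positivity, by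
    linarith [mul_pos hδ hnorm]⟩
  have hcw : ∀ w : ℂ, ‖w‖ ≤ 2 → dist (ε / d * w) 0 < δ := fun w hw => by
    rw [dist_zero_right, norm_mul, norm_div, Complex.norm_of_nonneg hε.le, div_mul_eq_mul_div,
      div_lt_iff₀ hnorm]
    exact (by gcongr : ε * ‖w‖ ≤ ε * 2).trans_lt hεδ
  refine ⟨ε / d, div_ne_zero (Complex.ofReal_ne_zero.mpr hε.ne') hd, h0,
    fun w hw => (hδF (hcw w hw)).2, fun w hw hcone hre => ?_⟩
  have herr : ‖F (z + ε / d * w) - ε * w‖ ≤ ε * ‖w‖ / 4 := by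
    have h := (hδF (hcw w hw)).1
    rw [h0, sub_zero, smul_eq_mul, norm_mul, norm_div, Complex.norm_of_nonneg hε.le] at h
    rwa [show ε / d * w * d = ε * w by field_simp,
      show ‖d‖ / 4 * (ε / ‖d‖ * ‖w‖) = ε * ‖w‖ / 4 by field_simp] at h
  have herr_re : |(F (z + ε / d * w)).re - ε * w.re| ≤ ε * |w.re| / 2 := by
    have h := (Complex.abs_re_le_norm _).trans herr
    rw [Complex.sub_re, Complex.re_ofReal_mul] at h
    nlinarith [Complex.norm_le_abs_re_add_abs_im w]
  have hprod := (abs_mul w.re _).trans_le (mul_le_mul_of_nonneg_left herr_re (abs_nonneg w.re))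
  have hsq : 0 < ε * (|w.re| * |w.re|) := by positivity
  nlinarith [neg_le_of_abs_le hprod, abs_mul_abs_self w.re]

namespace IsCrossing

variable {z c : ℂ}

theorem re_mul_re_pos_ofReal (h : IsCrossing F z c) {t : ℝ} (ht : t ∈ Icc (-1) 1) (ht0 : t ≠ 0) :
    0 < t * (F (z + c * t)).re :=
  h.re_mul_re_pos t (by rw [Complex.norm_real]; exact (abs_le.mpr ht).trans one_le_two)
    (by simp) ht0

theorem image_segment_subset (h : IsCrossing F z c) :
    (fun t : ℝ => z + c * t) '' Icc (-1) 1 ⊆ imaginaryFree F := by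
  rintro _ ⟨t, ht, rfl⟩
  refine ⟨h.mem_ball t (by rw [Complex.norm_real]; exact (abs_le.mpr ht).trans one_le_two),
    fun hre => ?_⟩
  rcases eq_or_ne t 0 with rfl | ht0
  · simpa using h.eq_zero
  · exact absurd (h.re_mul_re_pos_ofReal ht ht0) (by simp [hre])

theorem add_mem_reNeZero (h : IsCrossing F z c) : z + c ∈ reNeZero F :=
  ⟨by simpa using h.mem_ball 1, fun hre => by simpa [hre] using h.re_mul_re_pos 1⟩

theorem sub_mem_reNeZero (h : IsCrossing F z c) : z - c ∈ reNeZero F :=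
  ⟨by simpa [sub_eq_add_neg] using h.mem_ball (-1),
    fun hre => by simpa [hre, ← sub_eq_add_neg] using h.re_mul_re_pos (-1)⟩

theorem exists_re_eq_zero (h : IsCrossing F z c) (hF : ContinuousOn F (ball 0 1)) {y : ℝ}
    (hy : 0 < |y|) (hy1 : |y| ≤ 1) :
    ∃ x ∈ Icc (-|y|) |y|, (F (z + c * (x + y * Complex.I))).re = 0 := by
  have hnorm : ∀ x ∈ Icc (-|y|) |y|, ‖(x + y * Complex.I : ℂ)‖ ≤ 2 := fun x hx => by
    linarith [norm_add_mul_I_le x y, abs_le.mpr hx]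
  have hcont : ContinuousOn (fun x : ℝ => (F (z + c * (x + y * Complex.I))).re)
      (Icc (-|y|) |y|) :=
    Complex.continuous_re.comp_continuousOn
      (hF.comp (by fun_prop) fun x hx => h.mem_ball _ (hnorm x hx))
  have hleft := h.re_mul_re_pos _ (hnorm (-|y|) ⟨le_rfl, by linarith⟩) (by simp)
    (by simpa using hy.ne')
  have hright := h.re_mul_re_pos _ (hnorm |y| ⟨by linarith, le_rfl⟩) (by simp)
    (by simpa using hy.ne')
  simp only [Complex.add_re, Complex.ofReal_re, Complex.re_ofReal_mul, Complex.I_re, mul_zero,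
    add_zero] at hleft hright
  exact intermediate_value_Icc (by linarith) hcont
    ⟨(neg_of_mul_pos_right hleft (by linarith)).le, (pos_of_mul_pos_right hright hy.le).le⟩

theorem exists_mem_connectedComponentIn_one_le_norm (h : IsCrossing F z c)
    (hF : ContinuousOn F (ball 0 1)) (hopen : ∀ z ∈ ball (0 : ℂ) 1, 𝓝 (F z) ≤ map F (𝓝 z))
    {E : Set ℂ} (hE : IsCompact E) (hEF : E ⊆ imaginaryFree F) {y : ℝ} (hy : 0 < |y|)
    (hy1 : |y| ≤ 1) (hyE : ∀ x ∈ Icc (-|y|) |y|, z + c * (x + y * Complex.I) ∉ E) :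
    ∃ p ∈ connectedComponentIn Eᶜ (z + c * (y * Complex.I)), 1 ≤ ‖p‖ := by
  obtain ⟨x, hx, hre⟩ := h.exists_re_eq_zero hF hy hy1
  obtain ⟨p, hp, hp1⟩ := _root_.exists_mem_connectedComponentIn_one_le_norm hF hopen hE hEF
    (hyE x hx) hre
  refine ⟨p, ?_, hp1⟩
  set S : Set ℂ := (fun x : ℝ => z + c * (x + y * Complex.I)) '' Icc (-|y|) |y|
  have hS : S ⊆ connectedComponentIn Eᶜ (z + c * (y * Complex.I)) :=
    (isPreconnected_Icc.image _ (by fun_prop)).subset_connectedComponentIn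
      ⟨0, ⟨by linarith, hy.le⟩, by simp⟩ (image_subset_iff.mpr hyE)
  rwa [connectedComponentIn_eq (hS (mem_image_of_mem _ hx))]

theorem exists_isPreconnected_of_notMem (h : IsCrossing F z c) (hF : ContinuousOn F (ball 0 1))
    (hopen : ∀ z ∈ ball (0 : ℂ) 1, 𝓝 (F z) ≤ map F (𝓝 z)) {E : Set ℂ} (hE : IsCompact E)
    (hEF : E ⊆ imaginaryFree F) (hz : z ∉ E) :
    ∃ η > 0, (∀ w, z + c * w ∈ E → η < ‖w‖) ∧ ∃ G : Set ℂ, IsPreconnected G ∧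
      G ⊆ (E ∪ (fun t : ℝ => z + c * t) '' Icc (-1) 1)ᶜ ∧
      z + c * (η * Complex.I) ∈ G ∧ z + c * -(η * Complex.I) ∈ G := by
  set L : Set ℂ := (fun t : ℝ => z + c * t) '' Icc (-1) 1
  obtain ⟨r, hr, hrE⟩ := Metric.eventually_nhds_iff.mp
    (ContinuousAt.eventually_mem (x := (0 : ℂ)) (f := fun w => z + c * w) (by fun_prop)
      (hE.isClosed.isOpen_compl.mem_nhds (by simpa using hz)))
  have hnorm : ∀ w, z + c * w ∈ E → r ≤ ‖w‖ := fun w hw => by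
    by_contra! hlt
    exact hrE (by rwa [dist_zero_right]) hw
  obtain ⟨η, hη, hηr, hη1⟩ : ∃ η > 0, 2 * η < r ∧ η ≤ 1 :=
    ⟨min (r / 4) 1, by positivity, by linarith [min_le_left (r / 4) 1], min_le_right _ _⟩
  have hK : IsCompact (E ∪ L) := hE.union (isCompact_Icc.image (by fun_prop))
  have hKF : E ∪ L ⊆ imaginaryFree F := union_subset hEF h.image_segment_subset
  have hexit : ∀ y : ℝ, |y| = η →
      ∃ p ∈ connectedComponentIn (E ∪ L)ᶜ (z + c * (y * Complex.I)), 1 ≤ ‖p‖ := fun y hy => by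
    refine h.exists_mem_connectedComponentIn_one_le_norm hF hopen hK hKF (by linarith)
      (by linarith) fun x hx => ?_
    rintro (hmem | ⟨t, -, ht⟩)
    · linarith [(hnorm _ hmem).trans (norm_add_mul_I_le x y), abs_le.mpr hx]
    · have him : 0 = y := by
        simpa using congrArg Complex.im (mul_left_cancel₀ h.ne_zero (add_left_cancel ht))
      rw [← him, abs_zero] at hy
      exact hη.ne hy
  obtain ⟨p, hp, hp1⟩ := hexit η (abs_of_pos hη)
  obtain ⟨q, hq, hq1⟩ := hexit (-η) (by rw [abs_neg, abs_of_pos hη])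
  have heq := connectedComponentIn_compl_eq (fun w hw => (hKF hw).1) hp hp1 hq hq1
  rw [Complex.ofReal_neg, neg_mul] at hq heq
  refine ⟨η, hη, fun w hw => by linarith [hnorm w hw], _, isPreconnected_connectedComponentIn,
    connectedComponentIn_subset _ _,
    mem_connectedComponentIn (connectedComponentIn_nonempty_iff.mp ⟨p, hp⟩), ?_⟩
  rw [heq]
  exact mem_connectedComponentIn (connectedComponentIn_nonempty_iff.mp ⟨q, hq⟩)

theorem mem_of_isPreconnected (h : IsCrossing F z c) (hF : ContinuousOn F (ball 0 1))
    (hopen : ∀ z ∈ ball (0 : ℂ) 1, 𝓝 (F z) ≤ map F (𝓝 z)) {E : Set ℂ} (hE : IsCompact E)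
    (hEp : IsPreconnected E) (hEF : E ⊆ imaginaryFree F) (hadd : z + c ∈ E) (hsub : z - c ∈ E) :
    z ∈ E := by
  by_contra hz
  obtain ⟨η, hη, hnorm, G, hG, hGE, hmem, hmem'⟩ :=
    h.exists_isPreconnected_of_notMem hF hopen hE hEF hz
  let φ : ℂ ≃ₜ ℂ := (Homeomorph.mulLeft₀ c h.ne_zero).trans (Homeomorph.addLeft z)
  have hφ : ∀ w, φ w = z + c * w := fun _ => rfl
  refine notMem_of_isPreconnected_of_crossing (φ.isPreconnected_preimage.mpr hG)
    (φ.isPreconnected_preimage.mpr hEp) (hE.isClosed.preimage φ.continuous)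
    (by simpa [hφ] using hadd) (by simpa [hφ, ← sub_eq_add_neg] using hsub) hη hnorm
    (fun w hw => ?_) hmem hmem'
  rintro (hwE | ⟨t, ht, rfl⟩)
  · exact hGE hw (Or.inl hwE)
  · exact hGE hw (Or.inr ⟨t, ht, rfl⟩)

theorem eq_of_connectedComponentIn_eq {z₁ z₂ c₁ c₂ : ℂ} (h₁ : IsCrossing F z₁ c₁)
    (h₂ : IsCrossing F z₂ c₂) (hF : ContinuousOn F (ball 0 1))
    (hopen : ∀ z ∈ ball (0 : ℂ) 1, 𝓝 (F z) ≤ map F (𝓝 z))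
    (hadd : connectedComponentIn (reNeZero F) (z₁ + c₁) =
      connectedComponentIn (reNeZero F) (z₂ + c₂))
    (hsub : connectedComponentIn (reNeZero F) (z₁ - c₁) =
      connectedComponentIn (reNeZero F) (z₂ - c₂)) : z₁ = z₂ := by
  obtain ⟨A, hA, hAp, hAF, hA₁, hA₂⟩ := exists_isCompact_isPreconnected_of_connectedComponentIn_eq
    (isOpen_reNeZero hF) h₁.add_mem_reNeZero h₂.add_mem_reNeZero hadd
  obtain ⟨B, hB, hBp, hBF, hB₁, hB₂⟩ := exists_isCompact_isPreconnected_of_connectedComponentIn_eq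
    (isOpen_reNeZero hF) h₁.sub_mem_reNeZero h₂.sub_mem_reNeZero hsub
  set L : Set ℂ := (fun t : ℝ => z₂ + c₂ * t) '' Icc (-1) 1
  have hmem : z₁ ∈ A ∪ L ∪ B := by
    refine h₁.mem_of_isPreconnected hF hopen
      ((hA.union (isCompact_Icc.image (by fun_prop))).union hB) ?_ ?_
      (Or.inl (Or.inl hA₁)) (Or.inr hB₁)
    · have hL : IsPreconnected L := isPreconnected_Icc.image _ (by fun_prop)
      exact .union (z₂ - c₂) (Or.inr ⟨-1, by simp, by simp [sub_eq_add_neg]⟩) hB₂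
        (.union (z₂ + c₂) hA₂ ⟨1, by simp, by simp⟩ hAp hL) hBp
    · exact union_subset (union_subset (hAF.trans reNeZero_subset_imaginaryFree)
        h₂.image_segment_subset) (hBF.trans reNeZero_subset_imaginaryFree)
  have hre : (F z₁).re = 0 := by simp [h₁.eq_zero]
  rcases hmem with (hzA | ⟨t, ht, htz⟩) | hzB
  · exact absurd hre (hAF hzA).2
  · rcases eq_or_ne t 0 with rfl | ht0
    · simpa using htz.symm
    · have hpos := h₂.re_mul_re_pos_ofReal ht ht0
      rw [show z₂ + c₂ * t = z₁ from htz, hre, mul_zero] at hpos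
      exact absurd hpos (lt_irrefl 0)
  · exact absurd hre (hBF hzB).2

end IsCrossing

theorem encard_zeros_le (hF : ContinuousOn F (ball 0 1))
    (hopen : ∀ z ∈ ball (0 : ℂ) 1, 𝓝 (F z) ≤ map F (𝓝 z))
    (hsimple : ∀ z ∈ ball (0 : ℂ) 1, F z = 0 → ∃ d ≠ 0, HasDerivAt F d z) :
    {z ∈ ball (0 : ℂ) 1 | F z = 0}.encard ≤
      (componentsIn (reNeZero F)).encard * (componentsIn (reNeZero F)).encard := by
  have hcrossing : ∀ z ∈ {z ∈ ball (0 : ℂ) 1 | F z = 0}, ∃ c, IsCrossing F z c := fun z hz => by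
    obtain ⟨d, hd, hder⟩ := hsimple z hz.1 hz.2
    exact exists_isCrossing hz.1 hder hz.2 hd
  choose! c hc using hcrossing
  rw [← encard_prod]
  refine encard_le_encard_of_injOn (f := fun z => (connectedComponentIn (reNeZero F) (z + c z),
    connectedComponentIn (reNeZero F) (z - c z))) (fun z hz => ?_) fun z hz w hw hzw => ?_
  · exact ⟨⟨_, (hc z hz).add_mem_reNeZero, rfl⟩, ⟨_, (hc z hz).sub_mem_reNeZero, rfl⟩⟩
  · obtain ⟨hadd, hsub⟩ := Prod.mk.inj hzw
    exact (hc z hz).eq_of_connectedComponentIn_eq (hc w hw) hF hopen hadd hsub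

end ZeroCount

section Bloch

theorem half_norm_mul_norm_sub_le {f f' : ℂ → ℂ} {a : ℂ} {s : Set ℂ} (hs : Convex ℝ s)
    (hf : ∀ z ∈ s, HasDerivAt f (f' z) z) (hf' : ∀ z ∈ s, ‖f' z - a‖ ≤ ‖a‖ / 2) {x y : ℂ}
    (hx : x ∈ s) (hy : y ∈ s) : ‖a‖ / 2 * ‖y - x‖ ≤ ‖f y - f x‖ := by
  have herror := hs.norm_image_sub_le_of_norm_hasDerivWithin_le (f := fun w => f w - a * w)
    (f' := fun w => f' w - a) (fun w hw =>
      (((hf w hw).sub ((hasDerivAt_id w).const_mul a)).congr_deriv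
        (by rw [mul_one])).hasDerivWithinAt) hf' hx hy
  have htri : ‖a‖ * ‖y - x‖ ≤ ‖f y - f x‖ + ‖a‖ / 2 * ‖y - x‖ := by
    rw [← norm_mul, show a * (y - x) = (f y - f x) - ((f y - a * y) - (f x - a * x)) by ring]
    exact (norm_sub_le _ _).trans (by gcongr)
  linarith

theorem ball_subset_image_closedBall_of_norm_deriv_sub_le {f f' : ℂ → ℂ} {a p : ℂ} {s : ℝ}
    (hs : 0 < s) (ha : a ≠ 0) (hf : ∀ z ∈ closedBall p s, HasDerivAt f (f' z) z)
    (hf' : ∀ z ∈ closedBall p s, ‖f' z - a‖ ≤ ‖a‖ / 2) :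
    ball (f p) (‖a‖ * s / 4) ⊆ f '' closedBall p s := by
  have ha' := norm_pos_iff.mpr ha
  have hlower : ∀ z ∈ closedBall p s, ‖a‖ / 2 * ‖z - p‖ ≤ ‖f z - f p‖ := fun z hz =>
    half_norm_mul_norm_sub_le (convex_closedBall p s) hf hf' (mem_closedBall_self hs.le) hz
  have hcont : DiffContOnCl ℂ f (ball p s) := by
    refine DifferentiableOn.diffContOnCl fun z hz => ?_
    rw [closure_ball _ hs.ne'] at hz
    exact (hf z hz).differentiableAt.differentiableWithinAt
  have hsphere : ∀ z ∈ sphere p s, ‖a‖ / 2 * s ≤ ‖f z - f p‖ := fun z hz => by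
    simpa only [mem_sphere_iff_norm.mp hz] using hlower z (sphere_subset_closedBall hz)
  have hne : ∀ᶠ z in 𝓝[≠] p, f z ≠ f p := by
    filter_upwards [self_mem_nhdsWithin, mem_nhdsWithin_of_mem_nhds (closedBall_mem_nhds p hs)]
      with z hz hzs
    have hzp : 0 < ‖z - p‖ := norm_pos_iff.mpr (sub_ne_zero.mpr hz)
    exact sub_ne_zero.mp (norm_pos_iff.mp
      ((mul_pos (half_pos ha') hzp).trans_le (hlower z hzs)))
  have himage := hcont.ball_subset_image_closedBall hs hsphere
    (hne.frequently.filter_mono nhdsWithin_le_nhds)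
  rwa [show ‖a‖ / 2 * s / 2 = ‖a‖ * s / 4 by ring] at himage

-- The point `p` maximizes `g x * (R - dist x x₀)`.
theorem exists_ball_forall_le_two_mul {X : Type*} [PseudoMetricSpace X] [ProperSpace X] {g : X → ℝ}
    {x₀ : X} {R : ℝ} (hR : 0 < R) (hg : ContinuousOn g (closedBall x₀ R)) (hx₀ : 0 < g x₀) :
    ∃ p, ∃ t > 0, 0 < g p ∧ ball p t ⊆ ball x₀ R ∧ R * g x₀ ≤ 2 * t * g p ∧
      ∀ x ∈ ball p t, g x ≤ 2 * g p := by
  obtain ⟨p, hp, hmax⟩ := (isCompact_closedBall x₀ R).exists_isMaxOn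
    ⟨x₀, mem_closedBall_self hR.le⟩ (f := fun x => g x * (R - dist x x₀))
    (hg.mul (by fun_prop))
  obtain ⟨t, ht⟩ : ∃ t, 2 * t = R - dist p x₀ := ⟨_, mul_div_cancel₀ _ two_ne_zero⟩
  have hmax' : ∀ x ∈ closedBall x₀ R, g x * (R - dist x x₀) ≤ g p * (2 * t) := fun x hx => by
    rw [ht]
    exact hmax hx
  have hle : g x₀ * R ≤ g p * (2 * t) := by
    simpa using hmax' x₀ (mem_closedBall_self hR.le)
  have hpos : 0 < g p * (2 * t) := (mul_pos hx₀ hR).trans_le hle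
  have ht0 : 0 ≤ 2 * t := by rw [ht]; linarith [mem_closedBall.mp hp]
  have hgp : 0 < g p := pos_of_mul_pos_left hpos ht0
  have htpos : 0 < t := by linarith [pos_of_mul_pos_right hpos hgp.le]
  have hdist : ∀ x ∈ ball p t, dist x x₀ < R - t := fun x hx => by
    linarith [mem_ball.mp hx, dist_triangle x p x₀]
  refine ⟨p, t, htpos, hgp, fun x hx => ?_, by linarith, fun x hx => ?_⟩
  · exact mem_ball.mpr (by linarith [hdist x hx])
  · rcases le_or_gt (g x) 0 with hgx | hgx
    · linarith
    · have hslack : t ≤ R - dist x x₀ := by linarith [hdist x hx]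
      have hgt := (mul_le_mul_of_nonneg_left hslack hgx.le).trans
        (hmax' x (mem_closedBall.mpr (by linarith [hdist x hx])))
      exact le_of_mul_le_mul_right (by linarith) htpos

theorem norm_sub_le_half_of_norm_le_two_mul {g : ℂ → ℂ} {p : ℂ} {t : ℝ} (ht : 0 < t)
    (hg : DifferentiableOn ℂ g (ball p t)) (hbound : ∀ z ∈ ball p t, ‖g z‖ ≤ 2 * ‖g p‖) :
    ∀ z ∈ closedBall p (t / 8), ‖g z - g p‖ ≤ ‖g p‖ / 2 := by
  intro z hz
  rw [mem_closedBall] at hz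
  have hmaps : MapsTo g (ball p t) (closedBall (g p) (3 * ‖g p‖)) := fun w hw => by
    rw [mem_closedBall, dist_eq_norm]
    linarith [norm_sub_le (g w) (g p), hbound w hw]
  have hschwarz := Complex.dist_le_div_mul_dist_of_mapsTo_ball hg hmaps (z := z)
    (by rw [mem_ball]; linarith)
  calc ‖g z - g p‖ = dist (g z) (g p) := (dist_eq_norm _ _).symm
    _ ≤ 3 * ‖g p‖ / t * dist z p := hschwarz
    _ ≤ 3 * ‖g p‖ / t * (t / 8) := by gcongr
    _ = 3 / 8 * ‖g p‖ := by field_simp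
    _ ≤ ‖g p‖ / 2 := by linarith [norm_nonneg (g p)]

/-- **Bloch's theorem**, with a non-optimal constant. -/
theorem exists_ball_subset_image {f : ℂ → ℂ} {z₀ : ℂ} {ρ : ℝ} (hρ : 0 < ρ)
    (hf : DifferentiableOn ℂ f (ball z₀ ρ)) :
    ∃ w, ball w (ρ * ‖deriv f z₀‖ / 128) ⊆ f '' ball z₀ ρ := by
  rcases eq_or_ne (deriv f z₀) 0 with h0 | h0
  · exact ⟨0, by simp [h0]⟩
  have hf' : DifferentiableOn ℂ (deriv f) (ball z₀ ρ) := hf.deriv isOpen_ball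
  obtain ⟨p, t, ht, hp, hsub, hle, hbound⟩ := exists_ball_forall_le_two_mul (half_pos hρ)
    (hf'.continuousOn.norm.mono (closedBall_subset_ball (half_lt_self hρ)))
    (norm_pos_iff.mpr h0)
  have hball : ball p t ⊆ ball z₀ ρ := hsub.trans (ball_subset_ball (by linarith))
  have hclosedBall : closedBall p (t / 8) ⊆ ball z₀ ρ :=
    (closedBall_subset_ball (by linarith)).trans hball
  have himage := ball_subset_image_closedBall_of_norm_deriv_sub_le (by positivity)
    (norm_pos_iff.mp hp) (fun z hz =>
      (hf.differentiableAt (isOpen_ball.mem_nhds (hclosedBall hz))).hasDerivAt)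
    (norm_sub_le_half_of_norm_le_two_mul ht (hf'.mono hball) hbound)
  exact ⟨f p, (ball_subset_ball (by linarith)).trans (himage.trans (image_mono hclosedBall))⟩

end Bloch

section Landau

/-- For all but countably many real `t`, the function `F` takes the value `t * I` at most `p`
times in the unit disc. This is how a bound on the number of nodal domains of `re F` enters the
growth estimates. -/
def HasFewImaginaryValues (p : ℕ) (F : ℂ → ℂ) : Prop :=
  ∃ T : Set ℝ, T.Countable ∧ ∀ t ∉ T, {z ∈ ball (0 : ℂ) 1 | F z = t * Complex.I}.encard ≤ p

/-- The constant in the Landau-type bound for the logarithmic derivative of a function that omits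
one imaginary value and takes almost all others at most `p` times. It comes from the constant
`1 / 128` in Bloch's theorem and the radius of a disc in which `exp` takes each value of modulus
close to the typical one at least `p + 1` times. -/
def landauConst (p : ℕ) : ℝ := 128 * (2 * Real.pi * (p + 2) + 2)

theorem landauConst_pos (p : ℕ) : 0 < landauConst p := by
  have := Real.pi_pos
  unfold landauConst
  positivity

theorem exists_mem_Ioo_notMem {T : Set ℝ} (hT : T.Countable) {a b : ℝ} (hab : a < b) :
    ∃ t ∈ Ioo a b, t ∉ T := by
  obtain ⟨t, ht, ht'⟩ := (hT.dense_compl ℝ).inter_open_nonempty _ isOpen_Ioo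
    (nonempty_Ioo.mpr hab)
  exact ⟨t, ht, ht'⟩

theorem exists_exp_eq {f : ℂ → ℂ} {z₀ : ℂ} {ρ : ℝ} (hρ : 0 < ρ)
    (hf : DifferentiableOn ℂ f (ball z₀ ρ)) (h0 : ∀ z ∈ ball z₀ ρ, f z ≠ 0) :
    ∃ g : ℂ → ℂ, (∀ z ∈ ball z₀ ρ, HasDerivAt g (deriv f z / f z) z) ∧
      ∀ z ∈ ball z₀ ρ, Complex.exp (g z) = f z := by
  have hz₀ := mem_ball_self hρ (x := z₀)
  obtain ⟨g, hg₀, hg⟩ := (((hf.deriv isOpen_ball).div hf h0).isExactOn_ball).with_val_at z₀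
    (Complex.log (f z₀))
  refine ⟨g, hg, fun z hz => ?_⟩
  have hderiv : ∀ w ∈ ball z₀ ρ, HasDerivAt (fun w => f w * Complex.exp (-g w)) 0 w := by
    intro w hw
    have hfw : HasDerivAt f (deriv f w) w :=
      (hf.differentiableAt (isOpen_ball.mem_nhds hw)).hasDerivAt
    refine (hfw.mul (hg w hw).neg.cexp).congr_deriv ?_
    have := h0 w hw
    simp only [Pi.div_apply]
    field_simp
    ring
  have hconst : f z * Complex.exp (-g z) = f z₀ * Complex.exp (-g z₀) :=
    isOpen_ball.is_const_of_deriv_eq_zero (convex_ball z₀ ρ).isPreconnected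
      (fun w hw => (hderiv w hw).differentiableAt.differentiableWithinAt)
      (fun w hw => (hderiv w hw).deriv) hz hz₀
  rw [hg₀, Complex.exp_neg, Complex.exp_neg, Complex.exp_log (h0 z₀ hz₀),
    mul_inv_cancel₀ (h0 z₀ hz₀), mul_inv_eq_one₀ (Complex.exp_ne_zero _)] at hconst
  exact hconst.symm

theorem exists_injective_exp_eq_exp_mul_I (p : ℕ) {w : ℂ} {σ : ℝ} (hσ : |σ - w.re| ≤ 1) :
    ∃ x : Fin (p + 1) → ℂ, Function.Injective x ∧
      ∀ j, x j ∈ ball w (2 * Real.pi * (p + 2) + 2) ∧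
        Complex.exp (x j) = Real.exp σ * Complex.I := by
  have hpi := Real.pi_pos
  obtain ⟨k, hle, hlt⟩ : ∃ k : ℤ, w.im - Real.pi / 2 ≤ 2 * Real.pi * k ∧
      2 * Real.pi * k < w.im - Real.pi / 2 + 2 * Real.pi := by
    refine ⟨⌈(w.im - Real.pi / 2) / (2 * Real.pi)⌉, ?_, ?_⟩
    · rw [← div_le_iff₀' (by positivity)]
      exact Int.le_ceil _
    · rw [← lt_div_iff₀' (by positivity), add_div, div_self (by positivity)]
      exact Int.ceil_lt_add_one _
  refine ⟨fun j => (σ + Real.pi / 2 * Complex.I) + ((k + (j : ℕ) : ℤ) : ℂ) *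
    (2 * Real.pi * Complex.I), fun i j hij => ?_, fun j => ⟨?_, ?_⟩⟩
  · exact Fin.ext (by simpa [Complex.I_ne_zero, hpi.ne'] using hij)
  · have hj : 2 * Real.pi * (j : ℕ) ≤ 2 * Real.pi * p := by
      gcongr
      exact Nat.lt_succ_iff.mp j.2
    have hj0 : 0 ≤ 2 * Real.pi * (j : ℕ) := by positivity
    have him : |Real.pi / 2 + (k + (j : ℕ)) * (2 * Real.pi) - w.im| ≤
        2 * Real.pi * (p + 1) := by
      rw [abs_le]
      constructor <;> linarith
    rw [mem_ball, dist_eq_norm, show (σ + Real.pi / 2 * Complex.I) + ((k + (j : ℕ) : ℤ) : ℂ) *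
      (2 * Real.pi * Complex.I) - w = (σ - w.re : ℝ) +
        (Real.pi / 2 + (k + (j : ℕ)) * (2 * Real.pi) - w.im : ℝ) * Complex.I by
      apply Complex.ext <;> simp]
    linarith [norm_add_mul_I_le (σ - w.re) (Real.pi / 2 + (k + (j : ℕ)) * (2 * Real.pi) - w.im)]
  · rw [Complex.exp_add, Complex.exp_int_mul_two_pi_mul_I, Complex.exp_add,
      Complex.exp_pi_div_two_mul_I, mul_one, Complex.ofReal_exp]

theorem mul_norm_deriv_le_landauConst {g : ℂ → ℂ} {p : ℕ} {z₀ : ℂ} {ρ : ℝ} (hρ : 0 < ρ)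
    (hg : DifferentiableOn ℂ g (ball z₀ ρ)) {T : Set ℝ} (hT : T.Countable)
    (hcard : ∀ σ ∉ T,
      {z ∈ ball z₀ ρ | Complex.exp (g z) = Real.exp σ * Complex.I}.encard ≤ p) :
    ρ * ‖deriv g z₀‖ ≤ landauConst p := by
  by_contra! hlt
  obtain ⟨w, hw⟩ := exists_ball_subset_image hρ hg
  have hradius : 2 * Real.pi * (p + 2) + 2 ≤ ρ * ‖deriv g z₀‖ / 128 := by
    unfold landauConst at hlt
    linarith
  obtain ⟨σ, hσ, hσT⟩ := exists_mem_Ioo_notMem hT (show w.re < w.re + 1 by linarith)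
  obtain ⟨x, hx, hxw⟩ := exists_injective_exp_eq_exp_mul_I p (w := w) (σ := σ)
    (abs_le.mpr ⟨by linarith [hσ.1], by linarith [hσ.2]⟩)
  choose ζ hζ hgζ using fun j => hw (ball_subset_ball hradius (hxw j).1)
  have hinj : Function.Injective ζ := fun i j hij => hx (by rw [← hgζ, ← hgζ, hij])
  have hrange : range ζ ⊆ {z ∈ ball z₀ ρ | Complex.exp (g z) = Real.exp σ * Complex.I} := by
    rintro _ ⟨j, rfl⟩
    exact ⟨hζ j, by rw [hgζ, (hxw j).2]⟩
  have hle := (encard_le_encard hrange).trans (hcard σ hσT)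
  rw [← image_univ, hinj.injOn.encard_image, encard_univ] at hle
  simp only [ENat.card_eq_coe_fintype_card, Fintype.card_fin, Nat.cast_le] at hle
  omega

theorem norm_deriv_le_landauConst {F : ℂ → ℂ} {p : ℕ} (hp : HasFewImaginaryValues p F) {z₀ : ℂ}
    {ρ : ℝ} (hρ : 0 < ρ) (hsub : ball z₀ ρ ⊆ ball 0 1) (hF : DifferentiableOn ℂ F (ball z₀ ρ))
    {t₀ : ℝ} (h0 : ∀ z ∈ ball z₀ ρ, F z ≠ t₀ * Complex.I) :
    ‖deriv F z₀‖ ≤ landauConst p / ρ * ‖F z₀ - t₀ * Complex.I‖ := by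
  obtain ⟨T, hT, hcard⟩ := hp
  have hz₀ := mem_ball_self hρ (x := z₀)
  obtain ⟨g, hg, hexp⟩ := exists_exp_eq hρ (hF.sub_const (t₀ * Complex.I))
    fun z hz => sub_ne_zero.mpr (h0 z hz)
  have hT' : {σ : ℝ | t₀ + Real.exp σ ∈ T}.Countable :=
    hT.preimage_of_injOn fun a _ b _ hab => by simpa using hab
  have hle := mul_norm_deriv_le_landauConst hρ
    (fun z hz => (hg z hz).differentiableAt.differentiableWithinAt) hT' fun σ hσ => by
      refine (encard_le_encard ?_).trans (hcard _ hσ)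
      rintro z ⟨hz, hzσ⟩
      rw [hexp z hz] at hzσ
      refine ⟨hsub hz, ?_⟩
      push_cast at hzσ ⊢
      linear_combination hzσ
  have hpos : 0 < ‖F z₀ - t₀ * Complex.I‖ := norm_pos_iff.mpr (sub_ne_zero.mpr (h0 z₀ hz₀))
  rw [(hg z₀ hz₀).deriv, deriv_sub_const, norm_div, ← mul_div_assoc, div_le_iff₀ hpos] at hle
  rwa [div_mul_eq_mul_div, le_div_iff₀' hρ]

end Landau

section Growth

theorem exists_forall_le_dist_of_infinite {X : Type*} [MetricSpace X] {s : Set X}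
    (hs : s.Infinite) (p : ℕ) :
    ∃ κ > 0, ∀ Z : Set X, Z.encard ≤ p → ∃ x ∈ s, ∀ a ∈ Z, κ ≤ dist a x := by
  obtain ⟨t, hts, htcard⟩ := hs.exists_subset_card_eq (p + 2)
  have hnontrivial : (t : Set X).Nontrivial :=
    Finset.one_lt_card_iff_nontrivial.mp (by omega)
  have hpos := t.finite_toSet.infsep_pos_iff_nontrivial.mpr hnontrivial
  refine ⟨infsep (t : Set X) / 2, half_pos hpos, fun Z hZ => ?_⟩
  by_contra! hcon
  choose! a ha haκ using fun x (hx : x ∈ (t : Set X)) => hcon x (hts hx)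
  have hinj : InjOn a t := by
    intro x hx y hy hxy
    by_contra hne
    have hay := haκ y hy
    rw [← hxy] at hay
    linarith [infsep_le_dist_of_mem hx hy hne, dist_triangle_left x y (a x), haκ x hx]
  have hle := (encard_le_encard_of_injOn ha hinj).trans hZ
  rw [encard_coe_eq_coe_finsetCard, htcard, Nat.cast_le] at hle
  omega

theorem mul_norm_div_norm_sub_le {a ω : ℂ} (ha : a ≠ 0) (hω : ‖ω‖ = 1) {s : ℝ} (hs : 0 ≤ s) :
    ‖a‖ * ‖a / ‖a‖ - ω‖ ≤ 2 * ‖a - s * ω‖ := by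
  have hsω : ‖(s : ℂ) * ω‖ = s := by
    rw [norm_mul, hω, mul_one, Complex.norm_of_nonneg hs]
  have ha' : (‖a‖ : ℂ) ≠ 0 := by exact_mod_cast norm_ne_zero_iff.mpr ha
  calc ‖a‖ * ‖a / ‖a‖ - ω‖ = ‖(a - s * ω) - ((‖a‖ - s : ℝ) : ℂ) * ω‖ := by
        rw [show (a - s * ω) - ((‖a‖ - s : ℝ) : ℂ) * ω = (‖a‖ : ℂ) * (a / ‖a‖ - ω) by
          push_cast; field_simp; ring, norm_mul, Complex.norm_real, norm_norm]
    _ ≤ ‖a - s * ω‖ + |‖a‖ - ‖(s : ℂ) * ω‖| := by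
        refine (norm_sub_le _ _).trans_eq ?_
        rw [norm_mul, hω, mul_one, Complex.norm_real, Real.norm_eq_abs, hsω]
    _ ≤ 2 * ‖a - s * ω‖ := by linarith [abs_norm_sub_norm_le a (s * ω)]

theorem infinite_sphere_zero_one : (sphere (0 : ℂ) 1).Infinite := by
  refine (isPreconnected_sphere (by rw [Complex.rank_real_complex]; norm_num) 0
    1).infinite_of_nontrivial ⟨1, by simp, -1, by simp, ?_⟩
  norm_num [Complex.ext_iff]

theorem exists_circle_and_ray_far (p : ℕ) {r R : ℝ} (hr : 0 < r) (hR : R < 1) :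
    ∃ d > 0, ∀ Z : Set ℂ, Z.encard ≤ p → (∀ a ∈ Z, r ≤ ‖a‖) →
      (∃ ρ > R, ρ + d ≤ 1 ∧ ∀ a ∈ Z, d ≤ |‖a‖ - ρ|) ∧
      ∃ ω : ℂ, ‖ω‖ = 1 ∧ ∀ s : ℝ, 0 ≤ s → ∀ a ∈ Z, d ≤ dist a (s * ω) := by
  obtain ⟨κ₁, hκ₁, hradius⟩ := exists_forall_le_dist_of_infinite
    (Ioo_infinite (show R < (R + 1) / 2 by linarith)) p
  obtain ⟨κ₂, hκ₂, hdirection⟩ := exists_forall_le_dist_of_infinite infinite_sphere_zero_one p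
  refine ⟨min (min κ₁ ((1 - R) / 2)) (r * κ₂ / 2),
    lt_min (lt_min hκ₁ (by linarith)) (by positivity), fun Z hZ hZr => ⟨?_, ?_⟩⟩
  · obtain ⟨ρ, hρ, hρZ⟩ := hradius (norm '' Z) ((encard_image_le _ _).trans hZ)
    refine ⟨ρ, hρ.1, ?_, fun a ha => ?_⟩
    · linarith [hρ.2, min_le_left (min κ₁ ((1 - R) / 2)) (r * κ₂ / 2),
        min_le_right κ₁ ((1 - R) / 2)]
    · exact ((min_le_left _ _).trans (min_le_left _ _)).trans (hρZ _ (mem_image_of_mem _ ha))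
  · obtain ⟨ω, hω, hωZ⟩ := hdirection ((fun a : ℂ => a / ‖a‖) '' Z)
      ((encard_image_le _ _).trans hZ)
    have hω1 : ‖ω‖ = 1 := by simpa using hω
    refine ⟨ω, hω1, fun s hs a ha => (min_le_right _ _).trans ?_⟩
    have hκa : κ₂ ≤ ‖a / ‖a‖ - ω‖ := by
      simpa only [dist_eq_norm] using hωZ _ (mem_image_of_mem _ ha)
    have ha0 : a ≠ 0 := norm_pos_iff.mp (hr.trans_le (hZr a ha))
    rw [dist_eq_norm]
    linarith [mul_norm_div_norm_sub_le ha0 hω1 hs,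
      mul_le_mul (hZr a ha) hκa hκ₂.le (norm_nonneg a)]

variable {F : ℂ → ℂ} {p : ℕ} {t₀ d : ℝ}

theorem norm_sub_le_of_path (hp : HasFewImaginaryValues p F)
    (hF : DifferentiableOn ℂ F (ball 0 1)) {γ γ' : ℝ → ℂ} {ℓ c : ℝ} (hd : 0 < d) (hℓ : 0 ≤ ℓ)
    (hγ : ∀ s, HasDerivAt γ (γ' s) s) (hc : ∀ s, ‖γ' s‖ ≤ c)
    (hball : ∀ s ∈ Icc 0 ℓ, ‖γ s‖ + d ≤ 1)
    (hzero : ∀ s ∈ Icc 0 ℓ, ∀ a ∈ ball (0 : ℂ) 1, F a = t₀ * Complex.I → d ≤ dist a (γ s)) :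
    ‖F (γ ℓ) - t₀ * Complex.I‖ ≤ ‖F (γ 0) - t₀ * Complex.I‖ *
      Real.exp (landauConst p / d * c * ℓ) := by
  have hsub : ∀ s ∈ Icc 0 ℓ, ball (γ s) d ⊆ ball 0 1 := fun s hs =>
    ball_subset_ball' (by simpa only [dist_zero_right, add_comm] using hball s hs)
  have hderiv : ∀ s ∈ Icc 0 ℓ, HasDerivAt (fun s => F (γ s) - t₀ * Complex.I)
      (deriv F (γ s) * γ' s) s := fun s hs =>
    ((hF.differentiableAt (isOpen_ball.mem_nhds
      (hsub s hs (mem_ball_self hd)))).hasDerivAt.comp s (hγ s)).sub_const _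
  have hlandau : ∀ s ∈ Icc 0 ℓ, ‖deriv F (γ s) * γ' s‖ ≤
      landauConst p / d * c * ‖F (γ s) - t₀ * Complex.I‖ + 0 := fun s hs => by
    have hle := norm_deriv_le_landauConst hp hd (hsub s hs) (hF.mono (hsub s hs))
      fun z hz hFz => (hzero s hs z (hsub s hs hz) hFz).not_gt hz
    have hpos := landauConst_pos p
    calc ‖deriv F (γ s) * γ' s‖ = ‖deriv F (γ s)‖ * ‖γ' s‖ := norm_mul _ _
      _ ≤ landauConst p / d * ‖F (γ s) - t₀ * Complex.I‖ * c := by gcongr; exact hc s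
      _ = landauConst p / d * c * ‖F (γ s) - t₀ * Complex.I‖ + 0 := by ring
  have hgronwall := norm_le_gronwallBound_of_norm_deriv_right_le
    (fun s hs => (hderiv s hs).continuousAt.continuousWithinAt)
    (fun s hs => (hderiv s (Ico_subset_Icc_self hs)).hasDerivWithinAt) le_rfl
    (fun s hs => hlandau s (Ico_subset_Icc_self hs)) ℓ (right_mem_Icc.mpr hℓ)
  rwa [gronwallBound_ε0, sub_zero] at hgronwall

theorem norm_sub_le_of_ray (hp : HasFewImaginaryValues p F)
    (hF : DifferentiableOn ℂ F (ball 0 1)) (hd : 0 < d) {ω : ℂ} (hω : ‖ω‖ = 1) {ρ : ℝ}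
    (hρ : 0 ≤ ρ) (hρd : ρ + d ≤ 1) (hzero : ∀ s : ℝ, 0 ≤ s → ∀ a ∈ ball (0 : ℂ) 1,
      F a = t₀ * Complex.I → d ≤ dist a (s * ω)) :
    ‖F (ρ * ω) - t₀ * Complex.I‖ ≤ ‖F 0 - t₀ * Complex.I‖ *
      Real.exp (landauConst p / d) := by
  have hnorm : ∀ s ∈ Icc 0 ρ, ‖(s : ℂ) * ω‖ + d ≤ 1 := fun s hs => by
    rw [norm_mul, hω, mul_one, Complex.norm_of_nonneg hs.1]
    linarith [hs.2]
  have hpath := norm_sub_le_of_path hp hF (γ := fun s => s * ω) (γ' := fun _ => ω) hd hρ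
    (fun s => by simpa using (Complex.ofRealCLM.hasDerivAt (x := s)).mul_const ω)
    (fun _ => hω.le) hnorm fun s hs => hzero s hs.1
  simp only [Complex.ofReal_zero, zero_mul, mul_one] at hpath
  have hpos := landauConst_pos p
  exact hpath.trans (by gcongr; exact mul_le_of_le_one_right (by positivity) (by linarith))

theorem norm_sub_le_of_circle (hp : HasFewImaginaryValues p F)
    (hF : DifferentiableOn ℂ F (ball 0 1)) (hd : 0 < d) {ρ : ℝ} (hρ : 0 < ρ) (hρd : ρ + d ≤ 1)
    (hzero : ∀ a ∈ ball (0 : ℂ) 1, F a = t₀ * Complex.I → d ≤ |‖a‖ - ρ|) {z w : ℂ}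
    (hz : ‖z‖ = ρ) (hw : ‖w‖ = ρ) :
    ‖F w - t₀ * Complex.I‖ ≤ ‖F z - t₀ * Complex.I‖ *
      Real.exp (landauConst p / d * Real.pi) := by
  set θ := Complex.arg (w / z)
  have hz0 : z ≠ 0 := norm_pos_iff.mp (hz ▸ hρ)
  have hθ : z * Complex.exp (θ * Complex.I) = w := by
    have hpolar := Complex.norm_mul_exp_arg_mul_I (w / z)
    rw [norm_div, hz, hw, div_self hρ.ne', Complex.ofReal_one, one_mul] at hpolar
    rw [hpolar, mul_div_cancel₀ _ hz0]
  have hnorm : ∀ s : ℝ, ‖z * Complex.exp (s * θ * Complex.I)‖ = ρ := fun s => by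
    rw [norm_mul, hz, ← Complex.ofReal_mul, Complex.norm_exp_ofReal_mul_I, mul_one]
  have hderiv : ∀ s : ℝ, HasDerivAt (fun s : ℝ => z * Complex.exp (s * θ * Complex.I))
      (z * Complex.exp (s * θ * Complex.I) * (θ * Complex.I)) s := fun s => by
    have hline : HasDerivAt (fun s : ℝ => (s : ℂ) * θ * Complex.I) (θ * Complex.I) s := by
      simpa using ((Complex.ofRealCLM.hasDerivAt (x := s)).mul_const (θ : ℂ)).mul_const Complex.I
    simpa only [mul_assoc] using hline.cexp.const_mul z
  have hspeed : ∀ s : ℝ, ‖z * Complex.exp (s * θ * Complex.I) * (θ * Complex.I)‖ ≤ Real.pi :=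
    fun s => by
      rw [norm_mul, hnorm, norm_mul, Complex.norm_I, mul_one, Complex.norm_real, Real.norm_eq_abs]
      exact (mul_le_of_le_one_left (abs_nonneg _) (by linarith)).trans (Complex.abs_arg_le_pi _)
  have hpath := norm_sub_le_of_path hp hF hd zero_le_one hderiv hspeed
    (fun s _ => by rwa [hnorm]) fun s _ a ha haF => (hzero a ha haF).trans <| by
      simpa only [hnorm, dist_eq_norm] using
        abs_norm_sub_norm_le a (z * Complex.exp (s * θ * Complex.I))
  simpa only [Complex.ofReal_one, one_mul, hθ, Complex.ofReal_zero, zero_mul, Complex.exp_zero,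
    mul_one] using hpath

theorem exists_bound_of_bound_near_zero (p : ℕ) {r R : ℝ} (hr : 0 < r) (hR0 : 0 < R)
    (hR : R < 1) :
    ∃ A : ℝ, ∀ F : ℂ → ℂ, DifferentiableOn ℂ F (ball 0 1) → HasFewImaginaryValues p F →
      (∀ z ∈ ball (0 : ℂ) r, ‖F z‖ ≤ 1) → ∀ z ∈ closedBall (0 : ℂ) R, ‖F z‖ ≤ A := by
  obtain ⟨d, hd, hfar⟩ := exists_circle_and_ray_far p hr hR
  set L := landauConst p / d
  refine ⟨4 * Real.exp L * Real.exp (L * Real.pi) + 3, fun F hF hp hFr z hz => ?_⟩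
  obtain ⟨T, hT, hcard⟩ := id hp
  obtain ⟨t₀, ht₀, ht₀T⟩ := exists_mem_Ioo_notMem hT (show (2 : ℝ) < 3 by norm_num)
  have hnorm : ‖(t₀ * Complex.I : ℂ)‖ = t₀ := by
    rw [norm_mul, Complex.norm_I, mul_one, Complex.norm_of_nonneg (by linarith [ht₀.1])]
  have hZr : ∀ a ∈ {z ∈ ball (0 : ℂ) 1 | F z = t₀ * Complex.I}, r ≤ ‖a‖ := by
    rintro a ⟨-, hFa⟩
    by_contra! hlt
    have hle := hFr a (mem_ball_zero_iff.mpr hlt)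
    rw [hFa, hnorm] at hle
    linarith [ht₀.1]
  obtain ⟨⟨ρ, hRρ, hρd, hρ⟩, ω, hω, hωs⟩ := hfar _ (hcard t₀ ht₀T) hZr
  have hρ0 : 0 < ρ := hR0.trans hRρ
  have hcenter : ‖F 0 - t₀ * Complex.I‖ ≤ 4 := by
    linarith [norm_sub_le (F 0) (t₀ * Complex.I), hFr 0 (mem_ball_self hr), ht₀.2]
  have hray := norm_sub_le_of_ray hp hF hd hω hρ0.le hρd fun s hs a ha hFa =>
    hωs s hs a ⟨ha, hFa⟩
  have hsphere : ∀ w ∈ sphere (0 : ℂ) ρ,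
      ‖F w‖ ≤ 4 * Real.exp L * Real.exp (L * Real.pi) + 3 := fun w hw => by
    have hcircle := norm_sub_le_of_circle hp hF hd hρ0 hρd (fun a ha hFa => hρ a ⟨ha, hFa⟩)
      (z := ρ * ω) (by rw [norm_mul, hω, mul_one, Complex.norm_of_nonneg hρ0.le])
      (mem_sphere_zero_iff_norm.mp hw)
    have hle := hcircle.trans (mul_le_mul_of_nonneg_right (hray.trans
      (mul_le_mul_of_nonneg_right hcenter (Real.exp_pos _).le)) (Real.exp_pos _).le)
    linarith [norm_sub_norm_le (F w) (t₀ * Complex.I), ht₀.2]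
  have hcont : DiffContOnCl ℂ F (ball 0 ρ) := by
    refine (hF.mono ?_).diffContOnCl
    rw [closure_ball _ hρ0.ne']
    exact closedBall_subset_ball (by linarith)
  refine Complex.norm_le_of_forall_mem_frontier_norm_le isBounded_ball hcont (fun w hw => ?_)
    (subset_closure (closedBall_subset_ball hRρ hz))
  rw [frontier_ball _ hρ0.ne'] at hw
  exact hsphere w hw

theorem HasFewImaginaryValues.ofReal_mul_add (hp : HasFewImaginaryValues p F) {c : ℝ}
    (hc : c ≠ 0) (b : ℝ) : HasFewImaginaryValues p (fun z => c * F z + b * Complex.I) := by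
  obtain ⟨T, hT, hcard⟩ := hp
  refine ⟨{t | (t - b) / c ∈ T}, hT.preimage_of_injOn fun x _ y _ hxy => by
    simpa [div_left_inj' hc] using hxy, fun t ht => (encard_le_encard ?_).trans (hcard _ ht)⟩
  rintro z ⟨hz, hzt⟩
  refine ⟨hz, ?_⟩
  have hc' : (c : ℂ) ≠ 0 := by exact_mod_cast hc
  push_cast
  field_simp
  linear_combination hzt

-- The Borel–Carathéodory inequality bounds `F` near the centre.
theorem exists_bound_of_abs_re_le_one (p : ℕ) {R : ℝ} (hR0 : 0 < R) (hR : R < 1) :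
    ∃ A : ℝ, ∀ F : ℂ → ℂ, DifferentiableOn ℂ F (ball 0 1) → HasFewImaginaryValues p F →
      (F 0).im = 0 → (∀ z ∈ closedBall (0 : ℂ) (1 / 2), |(F z).re| ≤ 1) →
      ∀ z ∈ closedBall (0 : ℂ) R, ‖F z‖ ≤ A := by
  obtain ⟨A, hA⟩ := exists_bound_of_bound_near_zero p (show (0 : ℝ) < 1 / 4 by norm_num) hR0 hR
  refine ⟨8 * A, fun F hF hp h0 hre z hz => ?_⟩
  have hnorm0 : ‖F 0‖ ≤ 1 := by
    rw [← Complex.re_add_im (F 0), h0, Complex.ofReal_zero, zero_mul, add_zero, Complex.norm_real]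
    exact hre 0 (mem_closedBall_self (by norm_num))
  have hnear : ∀ w ∈ ball (0 : ℂ) (1 / 4), ‖F w‖ ≤ 8 := by
    intro w hw
    rw [mem_ball_zero_iff] at hw
    have hbc := Complex.borelCaratheodory (f := F) (M := 1) (R := 1 / 2) one_pos
      (hF.mono (ball_subset_ball (by norm_num)))
      (fun y hy => (abs_le.mp (hre y (ball_subset_closedBall hy))).2) (by norm_num)
      (z := w) (by rw [mem_ball_zero_iff]; linarith)
    refine hbc.trans ?_
    rw [← add_div, div_le_iff₀ (by linarith)]
    nlinarith [norm_nonneg w]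
  have hscale : ∀ w, ‖((1 / 8 : ℝ) : ℂ) * F w + (0 : ℝ) * Complex.I‖ = ‖F w‖ / 8 := fun w => by
    rw [Complex.ofReal_zero, zero_mul, add_zero, norm_mul, Complex.norm_of_nonneg (by norm_num)]
    ring
  have hle := hA (fun z => ((1 / 8 : ℝ) : ℂ) * F z + (0 : ℝ) * Complex.I)
    ((hF.const_mul _).add_const _) (hp.ofReal_mul_add (by norm_num) 0)
    (fun w hw => by rw [hscale]; linarith [hnear w hw]) z hz
  rw [hscale] at hle
  linarith

end Growth

section ComponentCount

variable {F : ℂ → ℂ}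

theorem countable_setOf_deriv_eq_zero (hF : AnalyticOnNhd ℂ F (ball 0 1))
    (hne : ∀ z ∈ ball (0 : ℂ) 1, ¬∀ᶠ w in 𝓝 z, F w = F z) :
    {z ∈ ball (0 : ℂ) 1 | deriv F z = 0}.Countable := by
  suffices h : ∀ z ∈ {z ∈ ball (0 : ℂ) 1 | deriv F z = 0},
      {z} ∈ 𝓝[{z ∈ ball (0 : ℂ) 1 | deriv F z = 0}] z by
    obtain ⟨t, -, ht, hcover⟩ := TopologicalSpace.countable_cover_nhdsWithin h
    exact ht.mono (by simpa using hcover)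
  intro z hz
  rcases (hF.deriv z hz.1).eventually_eq_zero_or_eventually_ne_zero with hzero | hzero
  · obtain ⟨ε, hε, hball⟩ := Metric.eventually_nhds_iff_ball.mp
      (hzero.and (isOpen_ball.mem_nhds hz.1))
    refine absurd ?_ (hne z hz.1)
    filter_upwards [ball_mem_nhds z hε] with w hw
    exact isOpen_ball.is_const_of_deriv_eq_zero (convex_ball z ε).isPreconnected
      (fun w hw => (hF w (hball w hw).2).differentiableAt.differentiableWithinAt)
      (fun w hw => (hball w hw).1) hw (mem_ball_self hε)
  · rw [eventually_nhdsWithin_iff] at hzero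
    rw [mem_nhdsWithin_iff_eventually]
    filter_upwards [hzero] with w hw hwD
    by_contra hne
    exact hw hne hwD.2

theorem hasFewImaginaryValues_of_eqOn_const {c : ℂ} (hF : EqOn F (fun _ => c) (ball 0 1))
    (hc : c.re ≠ 0) (p : ℕ) : HasFewImaginaryValues p F := by
  refine ⟨∅, countable_empty, fun t _ => ?_⟩
  suffices h : {z ∈ ball (0 : ℂ) 1 | F z = t * Complex.I} = ∅ by
    rw [h, encard_empty]
    exact zero_le
  refine eq_empty_iff_forall_notMem.mpr fun z ⟨hz, hzt⟩ => hc ?_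
  rw [← show F z = c from hF hz, hzt]
  simp

-- The countably many exceptional values are the critical ones: all other zeros are simple.
theorem hasFewImaginaryValues_of_encard_components_le (hF : AnalyticOnNhd ℂ F (ball 0 1))
    (hne : (reNeZero F).Nonempty) {N : ℕ} (hN : (componentsIn (reNeZero F)).encard ≤ N) :
    HasFewImaginaryValues (N * N) F := by
  by_cases hnonconst : ∀ z ∈ ball (0 : ℂ) 1, ¬∀ᶠ w in 𝓝 z, F w = F z
  · refine ⟨_, (countable_setOf_deriv_eq_zero hF hnonconst).image fun z => (F z).im,
      fun t ht => ?_⟩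
    have hshift : reNeZero (fun z => F z - t * Complex.I) = reNeZero F := by
      simp [reNeZero]
    have hanalytic : AnalyticOnNhd ℂ (fun z => F z - t * Complex.I) (ball 0 1) :=
      hF.sub analyticOnNhd_const
    have hle := encard_zeros_le hanalytic.continuousOn
      (fun z hz => ((hanalytic z hz).eventually_constant_or_nhds_le_map_nhds).resolve_left
        fun h => hnonconst z hz (by simpa using h))
      (fun z hz hz0 => ⟨deriv F z, fun hd => ht ⟨z, ⟨hz, hd⟩, by simp [sub_eq_zero.mp hz0]⟩,
        (hF z hz).differentiableAt.hasDerivAt.sub_const _⟩)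
    simp only [hshift, sub_eq_zero] at hle
    exact_mod_cast hle.trans (mul_le_mul' hN hN)
  · push Not at hnonconst
    obtain ⟨z, hz, hz_const⟩ := hnonconst
    have hconst : EqOn F (fun _ => F z) (ball 0 1) := hF.eqOn_of_preconnected_of_eventuallyEq
      analyticOnNhd_const (convex_ball 0 1).isPreconnected hz hz_const
    obtain ⟨y, hy, hy_re⟩ := hne
    exact hasFewImaginaryValues_of_eqOn_const hconst (by rwa [← show F y = F z from hconst hy]) _

end ComponentCount

section Montel

variable {ι : Type*} {F : ι → ℂ → ℂ} {f : ℂ → ℂ} {s U : Set ℂ} {x : ℂ} {A d : ℝ}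

theorem norm_deriv_le_of_norm_le_on_ball (hd : 0 < d) (hf : DifferentiableOn ℂ f (ball x d))
    (hA : ∀ z ∈ ball x d, ‖f z‖ ≤ A) : ‖deriv f x‖ ≤ 2 * A / d := by
  refine Complex.norm_deriv_le_div_of_mapsTo_ball hf (fun z hz => ?_) hd
  rw [mem_closedBall, dist_eq_norm]
  linarith [norm_sub_le (f z) (f x), hA z hz, hA x (mem_ball_self hd)]

theorem lipschitzOnWith_of_norm_le (hs : Convex ℝ s) (hd : 0 < d)
    (hsU : ∀ x ∈ s, ball x d ⊆ U) (hf : DifferentiableOn ℂ f U) (hA : ∀ z ∈ U, ‖f z‖ ≤ A) :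
    LipschitzOnWith (2 * A / d).toNNReal f s :=
  hs.lipschitzOnWith_of_nnnorm_deriv_le
    (fun x hx => hf.differentiableAt (mem_of_superset (ball_mem_nhds x hd) (hsU x hx)))
    fun x hx => NNReal.le_toNNReal_of_coe_le (norm_deriv_le_of_norm_le_on_ball hd
      (hf.mono (hsU x hx)) fun z hz => hA z (hsU x hx hz))

theorem equicontinuousOn_of_norm_le (hF : ∀ i, DifferentiableOn ℂ (F i) (ball x (2 * d)))
    (hA : ∀ i, ∀ z ∈ ball x (2 * d), ‖F i z‖ ≤ A) : EquicontinuousOn F (ball x d) := by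
  rcases le_or_gt d 0 with hd | hd
  · simp [ball_eq_empty.mpr hd, EquicontinuousOn]
  refine (LipschitzOnWith.uniformEquicontinuousOn F _ fun i => lipschitzOnWith_of_norm_le
    (convex_ball x d) hd (fun y hy => ?_) (hF i) (hA i)).equicontinuousOn
  refine ball_subset_ball' ?_
  linarith [mem_ball.mp hy]

theorem tendstoUniformlyOn_of_equicontinuousOn {l : Filter ι} {K : Set ℂ} (hK : IsCompact K)
    (hF : EquicontinuousOn F K) (hlim : ∀ z ∈ K, Tendsto (F · z) l (𝓝 (f z))) :
    TendstoUniformlyOn F f l K := by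
  have hpi := (EquicontinuousOn.tendsto_uniformOnFun_iff_pi' (𝔖 := {K})
    (fun _ h => h ▸ hK) (fun _ h => h ▸ hF) l f).mpr
    (tendsto_pi_nhds.mpr fun z => hlim z (by simpa only [sUnion_singleton] using z.2))
  exact UniformOnFun.tendsto_iff_tendstoUniformlyOn.mp hpi K rfl

theorem exists_tendsto_of_norm_le {u : ι → ℂ} (𝒰 : Ultrafilter ι) (hA : ∀ i, ‖u i‖ ≤ A) :
    ∃ y, Tendsto u 𝒰 (𝓝 y) := by
  obtain ⟨y, -, hy⟩ := (isCompact_closedBall (0 : ℂ) A).ultrafilter_le_nhds (𝒰.map u)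
    (tendsto_principal.mpr (Eventually.of_forall fun i => mem_closedBall_zero_iff.mpr (hA i)))
  exact ⟨y, hy⟩

/-- **Montel's theorem** along an ultrafilter. -/
theorem exists_tendstoLocallyUniformlyOn_of_norm_le (𝒰 : Ultrafilter ι) (hU : IsOpen U)
    (hF : ∀ i, DifferentiableOn ℂ (F i) U)
    (hbd : ∀ K ⊆ U, IsCompact K → ∃ A : ℝ, ∀ i, ∀ z ∈ K, ‖F i z‖ ≤ A) :
    ∃ G, DifferentiableOn ℂ G U ∧ TendstoLocallyUniformlyOn F G 𝒰 U := by
  have hlim : ∀ z, ∃ y, z ∈ U → Tendsto (F · z) 𝒰 (𝓝 y) := fun z => by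
    by_cases hz : z ∈ U
    · obtain ⟨A, hA⟩ := hbd {z} (singleton_subset_iff.mpr hz) isCompact_singleton
      exact (exists_tendsto_of_norm_le 𝒰 fun i => hA i z rfl).imp fun _ h _ => h
    · exact ⟨0, fun h => absurd h hz⟩
  choose G hG using hlim
  have hlocal : TendstoLocallyUniformlyOn F G 𝒰 U := by
    refine tendstoLocallyUniformlyOn_of_forall_exists_nhds fun x hx => ?_
    obtain ⟨r, hr, hrU⟩ := nhds_basis_closedBall.mem_iff.mp (hU.mem_nhds hx)
    obtain ⟨A, hA⟩ := hbd _ hrU (isCompact_closedBall x r)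
    have hsub : ball x (2 * (r / 2)) ⊆ closedBall x r := by
      rw [mul_div_cancel₀ r two_ne_zero]
      exact ball_subset_closedBall
    have hequi := equicontinuousOn_of_norm_le (fun i => (hF i).mono (hsub.trans hrU))
      fun i z hz => hA i z (hsub hz)
    refine ⟨closedBall x (r / 4),
      mem_nhdsWithin_of_mem_nhds (closedBall_mem_nhds x (by positivity)),
      tendstoUniformlyOn_of_equicontinuousOn (isCompact_closedBall x _)
        (hequi.mono (closedBall_subset_ball (by linarith))) fun z hz => hG z (hrU ?_)⟩
    exact closedBall_subset_closedBall (by linarith) hz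
  exact ⟨G, hlocal.differentiableOn (Eventually.of_forall hF) hU, hlocal⟩

end Montel

section ParametricIntegral

open MeasureTheory

variable {α : Type*} [MeasurableSpace α] {μ : Measure α} {f : ℂ → α → ℂ} {s : Set ℂ} {M : ℝ}

theorem aestronglyMeasurable_deriv_of_differentiableAt {w : ℂ}
    (hf : ∀ a, DifferentiableAt ℂ (f · a) w) (hmeas : ∀ᶠ z in 𝓝 w, AEStronglyMeasurable (f z) μ) :
    AEStronglyMeasurable (fun a => deriv (f · a) w) μ := by
  have hlim : ∀ᵐ a ∂μ, Tendsto (fun h => h⁻¹ • (f (w + h) a - f w a)) (𝓝[≠] 0)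
      (𝓝 (deriv (f · a) w)) :=
    Eventually.of_forall fun a => (hf a).hasDerivAt.tendsto_slope_zero
  have hshift : Tendsto (fun h => w + h) (𝓝[≠] 0) (𝓝 w) := by
    have := (continuous_const_add w).tendsto 0
    rw [add_zero] at this
    exact this.mono_left nhdsWithin_le_nhds
  obtain ⟨u, hu⟩ := (𝓝[≠] (0 : ℂ)).exists_seq_tendsto
  have hev := (hshift.comp hu).eventually hmeas
  obtain ⟨N, hN⟩ := eventually_atTop.mp hev
  refine aestronglyMeasurable_of_tendsto_ae atTop
    (f := fun n => (u (n + N))⁻¹ • (f (w + u (n + N)) - f w))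
    (fun n => ((hN (n + N) (by lia)).sub hmeas.self_of_nhds).const_smul _) ?_
  exact hlim.mono fun a ha => (ha.comp hu).comp (tendsto_add_atTop_nat N)

theorem differentiableOn_integral_of_norm_le [IsFiniteMeasure μ] (hs : IsOpen s)
    (hf : ∀ a, DifferentiableOn ℂ (f · a) s) (hmeas : ∀ w ∈ s, AEStronglyMeasurable (f w) μ)
    (hM : ∀ w ∈ s, ∀ a, ‖f w a‖ ≤ M) :
    DifferentiableOn ℂ (fun w => ∫ a, f w a ∂μ) s := by
  intro w hw
  obtain ⟨r, hr, hrs⟩ := Metric.isOpen_iff.mp hs w hw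
  have hball : ∀ z ∈ ball w (r / 2), ball z (r / 2) ⊆ s := fun z hz =>
    (ball_subset_ball' (by linarith [mem_ball.mp hz])).trans hrs
  have hderiv : ∀ a, ∀ z ∈ s, HasDerivAt (f · a) (deriv (f · a) z) z := fun a z hz =>
    ((hf a).differentiableAt (hs.mem_nhds hz)).hasDerivAt
  have hnear : ∀ᶠ z in 𝓝 w, AEStronglyMeasurable (f z) μ := by
    filter_upwards [hs.mem_nhds hw] using hmeas
  refine (hasDerivAt_integral_of_dominated_loc_of_deriv_le (ball_mem_nhds w (half_pos hr)) hnear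
    (Integrable.of_bound (hmeas w hw) M (Eventually.of_forall (hM w hw)))
    (aestronglyMeasurable_deriv_of_differentiableAt (fun a => (hderiv a w hw).differentiableAt)
      hnear) (Eventually.of_forall fun a z hz => ?_) (integrable_const (2 * M / (r / 2)))
    (Eventually.of_forall fun a z hz => hderiv a z (hball z hz (mem_ball_self (half_pos hr))))
    ).2.differentiableAt.differentiableWithinAt
  exact norm_deriv_le_of_norm_le_on_ball (half_pos hr) ((hf a).mono (hball z hz))
    fun y hy => hM y (hball z hz hy) a

theorem differentiableOn_circleIntegral_of_norm_le {g : ℂ → ℂ → ℂ} {c : ℂ} {R : ℝ} (hR : 0 ≤ R)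
    (hs : IsOpen s) (hg : ∀ ξ ∈ sphere c R, DifferentiableOn ℂ (g · ξ) s)
    (hcont : ∀ w ∈ s, ContinuousOn (g w) (sphere c R))
    (hM : ∀ w ∈ s, ∀ ξ ∈ sphere c R, ‖g w ξ‖ ≤ M) :
    DifferentiableOn ℂ (fun w => ∮ ξ in C(c, R), g w ξ) s := by
  have hmem := circleMap_mem_sphere c hR
  simp only [circleIntegral, deriv_circleMap, intervalIntegral.integral_of_le Real.two_pi_pos.le]
  refine differentiableOn_integral_of_norm_le (M := R * M) hs
    (fun θ => (hg _ (hmem θ)).const_smul (circleMap 0 R θ * Complex.I)) (fun w hw => ?_)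
    fun w hw θ => ?_
  · exact (((continuous_circleMap 0 R).mul continuous_const).smul
      ((hcont w hw).comp_continuous (continuous_circleMap c R) hmem)).aestronglyMeasurable
  · rw [norm_smul, norm_mul, norm_circleMap_zero, Complex.norm_I, mul_one, abs_of_nonneg hR]
    exact mul_le_mul_of_nonneg_left (hM w hw _ (hmem θ)) hR

end ParametricIntegral

section CauchyTransform

/-- The Cauchy integral over the unit circle of the boundary values `g`, as a function of a point
`x` inside the circle. Dividing `u` by `v` through `cauchyTransform (u / v)` only involves `1 / v`
on the circle, so it is controlled even where `v` has zeros inside. -/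
def cauchyTransform (g : ℂ → ℂ) (x : ℂ) : ℂ :=
  (2 * Real.pi * Complex.I)⁻¹ • ∮ ξ in C(0, 1), (ξ - x)⁻¹ • g ξ

variable {g h : ℂ → ℂ} {x x' ξ : ℂ} {M : ℝ}

theorem norm_inv_sub_le_two (hξ : ξ ∈ sphere (0 : ℂ) 1) (hx : x ∈ ball (0 : ℂ) (1 / 2)) :
    ‖(ξ - x)⁻¹‖ ≤ 2 := by
  rw [mem_sphere_zero_iff_norm] at hξ
  rw [mem_ball_zero_iff] at hx
  rw [norm_inv]
  exact inv_le_of_inv_le₀ two_pos (by linarith [norm_sub_norm_le ξ x])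

theorem sub_ne_zero_of_mem_sphere (hξ : ξ ∈ sphere (0 : ℂ) 1) (hx : x ∈ ball (0 : ℂ) 1) :
    ξ - x ≠ 0 :=
  sub_ne_zero.mpr (sphere_disjoint_ball.ne_of_mem hξ hx)

theorem norm_inv_sub_smul_le {c : ℂ} (hξ : ξ ∈ sphere (0 : ℂ) 1) (hx : x ∈ ball (0 : ℂ) (1 / 2))
    (hc : ‖c‖ ≤ M) : ‖(ξ - x)⁻¹ • c‖ ≤ 2 * M := by
  rw [norm_smul]
  exact mul_le_mul (norm_inv_sub_le_two hξ hx) hc (norm_nonneg _) zero_le_two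

theorem continuousOn_inv_sub_smul (hx : x ∈ ball (0 : ℂ) 1) (hg : ContinuousOn g (sphere 0 1)) :
    ContinuousOn (fun ξ => (ξ - x)⁻¹ • g ξ) (sphere 0 1) :=
  ((continuousOn_id.sub continuousOn_const).inv₀
    fun _ hξ => sub_ne_zero_of_mem_sphere hξ hx).smul hg

theorem norm_two_pi_I_inv_smul_circleIntegral_le (hM : ∀ ξ ∈ sphere (0 : ℂ) 1, ‖g ξ‖ ≤ M) :
    ‖(2 * Real.pi * Complex.I : ℂ)⁻¹ • ∮ ξ in C(0, 1), g ξ‖ ≤ M :=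
  (circleIntegral.norm_two_pi_i_inv_smul_integral_le_of_norm_le_const zero_le_one hM).trans_eq
    (one_mul M)

theorem norm_cauchyTransform_le (hx : x ∈ ball (0 : ℂ) (1 / 2))
    (hM : ∀ ξ ∈ sphere (0 : ℂ) 1, ‖g ξ‖ ≤ M) : ‖cauchyTransform g x‖ ≤ 2 * M :=
  norm_two_pi_I_inv_smul_circleIntegral_le fun ξ hξ =>
    norm_inv_sub_smul_le hξ hx (hM ξ hξ)

theorem cauchyTransform_sub (hx : x ∈ ball (0 : ℂ) 1) (hg : ContinuousOn g (sphere 0 1))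
    (hh : ContinuousOn h (sphere 0 1)) :
    cauchyTransform (fun ξ => g ξ - h ξ) x = cauchyTransform g x - cauchyTransform h x := by
  simp only [cauchyTransform, smul_sub ((_ : ℂ) - x)⁻¹]
  rw [circleIntegral.integral_sub ((continuousOn_inv_sub_smul hx hg).circleIntegrable
    zero_le_one) ((continuousOn_inv_sub_smul hx hh).circleIntegrable zero_le_one), smul_sub]

theorem norm_cauchyTransform_sub_le (hx : x ∈ ball (0 : ℂ) (1 / 2))
    (hx' : x' ∈ ball (0 : ℂ) (1 / 2)) (hg : ContinuousOn g (sphere 0 1))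
    (hM : ∀ ξ ∈ sphere (0 : ℂ) 1, ‖g ξ‖ ≤ M) :
    ‖cauchyTransform g x - cauchyTransform g x'‖ ≤ 4 * M * ‖x - x'‖ := by
  have hsub : ball (0 : ℂ) (1 / 2) ⊆ ball 0 1 := ball_subset_ball (by norm_num)
  rw [cauchyTransform, cauchyTransform, ← smul_sub, ← circleIntegral.integral_sub
    ((continuousOn_inv_sub_smul (hsub hx) hg).circleIntegrable zero_le_one)
    ((continuousOn_inv_sub_smul (hsub hx') hg).circleIntegrable zero_le_one)]
  refine norm_two_pi_I_inv_smul_circleIntegral_le fun ξ hξ => ?_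
  have hkernel : (ξ - x)⁻¹ - (ξ - x')⁻¹ = (ξ - x)⁻¹ * (ξ - x')⁻¹ * (x - x') := by
    field [sub_ne_zero_of_mem_sphere hξ (hsub hx), sub_ne_zero_of_mem_sphere hξ (hsub hx')]
  calc ‖(ξ - x)⁻¹ • g ξ - (ξ - x')⁻¹ • g ξ‖
      = ‖(ξ - x)⁻¹‖ * ‖(ξ - x')⁻¹‖ * ‖x - x'‖ * ‖g ξ‖ := by
        rw [← sub_smul, hkernel, norm_smul, norm_mul, norm_mul]
    _ ≤ 2 * 2 * ‖x - x'‖ * M := by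
        gcongr
        exacts [norm_inv_sub_le_two hξ hx, norm_inv_sub_le_two hξ hx', hM ξ hξ]
    _ = 4 * M * ‖x - x'‖ := by ring

theorem cauchyTransform_eq_of_eqOn {Q : ℂ → ℂ} (hQ : DifferentiableOn ℂ Q (closedBall 0 1))
    (hgQ : EqOn g Q (sphere 0 1)) (hx : x ∈ ball (0 : ℂ) 1) : cauchyTransform g x = Q x := by
  have hcongr : (∮ ξ in C(0, 1), (ξ - x)⁻¹ • g ξ) = ∮ ξ in C(0, 1), (ξ - x)⁻¹ • Q ξ :=
    circleIntegral.integral_congr zero_le_one fun ξ hξ => by simp only [hgQ hξ]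
  rw [cauchyTransform, hcongr, hQ.circleIntegral_sub_inv_smul hx,
    inv_smul_smul₀ Complex.two_pi_I_ne_zero]

variable {w : ℂ → ℂ → ℂ}

theorem differentiableOn_cauchyTransform {s : Set ℂ} (hs : IsOpen s)
    (hw : ∀ ξ ∈ sphere (0 : ℂ) 1, DifferentiableOn ℂ (w ξ) s)
    (hcont : ∀ y ∈ s, ContinuousOn (w · y) (sphere 0 1))
    (hM : ∀ y ∈ s, ∀ ξ ∈ sphere (0 : ℂ) 1, ‖w ξ y‖ ≤ M) (hx : x ∈ ball (0 : ℂ) (1 / 2)) :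
    DifferentiableOn ℂ (fun y => cauchyTransform (w · y) x) s :=
  (differentiableOn_circleIntegral_of_norm_le (M := 2 * M) zero_le_one hs
    (fun ξ hξ => (hw ξ hξ).const_smul (ξ - x)⁻¹)
    (fun y hy => continuousOn_inv_sub_smul (ball_subset_ball (by norm_num) hx) (hcont y hy))
    fun y hy ξ hξ => norm_inv_sub_smul_le hξ hx (hM y hy ξ hξ)).const_smul
    (2 * Real.pi * Complex.I : ℂ)⁻¹

theorem norm_cauchyTransform_sub_cauchyTransform_le {δ : ℝ} {y y' : ℂ}
    (hw : ∀ ξ ∈ sphere (0 : ℂ) 1, DifferentiableOn ℂ (w ξ) (ball 0 δ))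
    (hcont : ∀ y ∈ ball (0 : ℂ) δ, ContinuousOn (w · y) (sphere 0 1))
    (hM : ∀ y ∈ ball (0 : ℂ) δ, ∀ ξ ∈ sphere (0 : ℂ) 1, ‖w ξ y‖ ≤ M)
    (hx : x ∈ ball (0 : ℂ) (1 / 2)) (hx' : x' ∈ ball (0 : ℂ) (1 / 2))
    (hy' : y' ∈ ball (0 : ℂ) (δ / 2)) (hy : y ∈ ball y' (δ / 2)) :
    ‖cauchyTransform (w · y) x - cauchyTransform (w · y') x'‖ ≤
      4 * M * ‖x - x'‖ + 8 * M / δ * ‖y - y'‖ := by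
  have hδ : 0 < δ / 2 := dist_nonneg.trans_lt (mem_ball.mp hy)
  have hsub : ball y' (δ / 2) ⊆ ball 0 δ := ball_subset_ball' (by linarith [mem_ball.mp hy'])
  have hyδ := hsub hy
  have hy'δ := hsub (mem_ball_self hδ)
  have hlip : ∀ ξ ∈ sphere (0 : ℂ) 1, ‖w ξ y - w ξ y'‖ ≤ 2 * M / (δ / 2) * ‖y - y'‖ := by
    intro ξ hξ
    have := Complex.dist_le_div_mul_dist_of_mapsTo_ball (R₂ := 2 * M) ((hw ξ hξ).mono hsub)
      (fun z hz => mem_closedBall_iff_norm.mpr ((norm_sub_le _ _).trans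
        (by linarith [hM z (hsub hz) ξ hξ, hM y' hy'δ ξ hξ]))) hy
    rwa [dist_eq_norm, dist_eq_norm] at this
  have hright := norm_cauchyTransform_le hx hlip
  rw [cauchyTransform_sub (ball_subset_ball (by norm_num) hx) (hcont y hyδ) (hcont y' hy'δ)]
    at hright
  calc ‖cauchyTransform (w · y) x - cauchyTransform (w · y') x'‖
      ≤ ‖cauchyTransform (w · y') x - cauchyTransform (w · y') x'‖ +
        ‖cauchyTransform (w · y) x - cauchyTransform (w · y') x‖ := by
        rw [add_comm]
        exact norm_sub_le_norm_sub_add_norm_sub _ _ _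
    _ ≤ 4 * M * ‖x - x'‖ + 2 * (2 * M / (δ / 2) * ‖y - y'‖) :=
        add_le_add (norm_cauchyTransform_sub_le hx hx' (hcont y' hy'δ) (hM y' hy'δ)) hright
    _ = 4 * M * ‖x - x'‖ + 8 * M / δ * ‖y - y'‖ := by ring

end CauchyTransform

section Division

variable {u v : ℂ → ℂ} {s U : Set ℂ}

theorem dslope_eventuallyEq_div {x : ℂ} (hv : DifferentiableAt ℂ v x) (hx : v x = 0)
    (hdv : deriv v x ≠ 0) (hux : u x = 0) :
    (fun z => if v z = 0 then deriv u z / deriv v z else u z / v z) =ᶠ[𝓝 x]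
      fun z => dslope u x z / dslope v x z := by
  have hne : dslope v x x ≠ 0 := by rwa [dslope_same]
  filter_upwards [(continuousAt_dslope_same.mpr hv).eventually_ne hne] with z hz
  rcases eq_or_ne z x with rfl | hzx
  · rw [if_pos hx, dslope_same, dslope_same]
  · have hv_eq := sub_smul_dslope v x z
    have hu_eq := sub_smul_dslope u x z
    rw [hx, sub_zero, smul_eq_mul] at hv_eq
    rw [hux, sub_zero, smul_eq_mul] at hu_eq
    rw [← hv_eq, ← hu_eq, if_neg (mul_ne_zero (sub_ne_zero.mpr hzx) hz),
      mul_div_mul_left _ _ (sub_ne_zero.mpr hzx)]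

theorem exists_differentiableOn_mul_eq (hU : IsOpen U) (hsU : s ⊆ U) (hu : DifferentiableOn ℂ u U)
    (hv : DifferentiableOn ℂ v U) (hz : ∀ x ∈ s, v x = 0 → deriv v x ≠ 0 ∧ u x = 0) :
    ∃ Q : ℂ → ℂ, DifferentiableOn ℂ Q s ∧ (∀ x, v x ≠ 0 → Q x = u x / v x) ∧
      ∀ x ∈ s, Q x * v x = u x := by
  classical
  refine ⟨fun x => if v x = 0 then deriv u x / deriv v x else u x / v x, fun x hx => ?_,
    fun x hx => if_neg hx, fun x hx => ?_⟩
  · have hnhds := hU.mem_nhds (hsU hx)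
    have hvx := hv.differentiableAt hnhds
    refine DifferentiableAt.differentiableWithinAt ?_
    by_cases hvx0 : v x = 0
    · obtain ⟨hdv, hux⟩ := hz x hx hvx0
      have hdu := ((Complex.differentiableOn_dslope hnhds).mpr hu).differentiableAt hnhds
      have hdv' := ((Complex.differentiableOn_dslope hnhds).mpr hv).differentiableAt hnhds
      exact (hdu.div hdv' (by rwa [dslope_same])).congr_of_eventuallyEq
        (dslope_eventuallyEq_div hvx hvx0 hdv hux)
    · refine ((hu.differentiableAt hnhds).div hvx hvx0).congr_of_eventuallyEq ?_
      filter_upwards [hvx.continuousAt.eventually_ne hvx0] with z hz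
      exact if_neg hz
  · by_cases hvx0 : v x = 0
    · rw [hvx0, mul_zero, (hz x hx hvx0).2]
    · simp only [hvx0, if_false]
      exact div_mul_cancel₀ _ hvx0

theorem cauchyTransform_div_mul (hU : IsOpen U) (hsU : closedBall 0 1 ⊆ U)
    (hu : DifferentiableOn ℂ u U) (hv : DifferentiableOn ℂ v U)
    (hv_sphere : ∀ ξ ∈ sphere (0 : ℂ) 1, v ξ ≠ 0)
    (hz : ∀ x ∈ closedBall (0 : ℂ) 1, v x = 0 → deriv v x ≠ 0 ∧ u x = 0) {x : ℂ}
    (hx : x ∈ ball (0 : ℂ) 1) : cauchyTransform (fun ξ => u ξ / v ξ) x * v x = u x := by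
  obtain ⟨Q, hQ, hQ_eq, hQ_mul⟩ := exists_differentiableOn_mul_eq hU hsU hu hv hz
  rw [cauchyTransform_eq_of_eqOn hQ (fun ξ hξ => (hQ_eq ξ (hv_sphere ξ hξ)).symm) hx,
    hQ_mul x (ball_subset_closedBall hx)]

theorem eqOn_zero_of_forall_mem_Ioo (hu : AnalyticOnNhd ℂ u U) (hU : IsPreconnected U)
    {a b c : ℝ} (hc : c ∈ Ioo a b) (hcU : (c : ℂ) ∈ U) (hzero : ∀ t ∈ Ioo a b, u (t : ℂ) = 0) :
    EqOn u 0 U := by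
  have hcoe : Tendsto (fun t : ℝ => (t : ℂ)) (𝓝[≠] c) (𝓝[≠] (c : ℂ)) :=
    Complex.continuous_ofReal.continuousAt.continuousWithinAt.tendsto_nhdsWithin
      fun t ht => Complex.ofReal_injective.ne ht
  have hev : ∀ᶠ t : ℝ in 𝓝[≠] c, u (t : ℂ) = 0 := by
    filter_upwards [nhdsWithin_le_nhds (Ioo_mem_nhds hc.1 hc.2)] using hzero
  exact hu.eqOn_zero_of_preconnected_of_frequently_eq_zero hU hcU (hcoe.frequently hev.frequently)

-- The identity holds for real parameters in the interval, where the zeros are simple, and extends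
-- to all parameters by analytic continuation.
theorem cauchyTransform_div_mul_of_Ioo {F G : ℂ → ℂ → ℂ} {M a b c : ℝ} {Y : Set ℂ} (hU : IsOpen U)
    (hsU : closedBall 0 1 ⊆ U) (hY : IsOpen Y) (hY' : IsPreconnected Y) (hc : c ∈ Ioo a b)
    (habY : ∀ t ∈ Ioo a b, (t : ℂ) ∈ Y) (hF₁ : ∀ y ∈ Y, DifferentiableOn ℂ (F · y) U)
    (hG₁ : ∀ y ∈ Y, DifferentiableOn ℂ (G · y) U) (hF₂ : ∀ x ∈ U, DifferentiableOn ℂ (F x) Y)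
    (hG₂ : ∀ x ∈ U, DifferentiableOn ℂ (G x) Y)
    (hG_ne : ∀ y ∈ Y, ∀ ξ ∈ sphere (0 : ℂ) 1, G ξ y ≠ 0)
    (hM : ∀ y ∈ Y, ∀ ξ ∈ sphere (0 : ℂ) 1, ‖F ξ y / G ξ y‖ ≤ M)
    (hz : ∀ t ∈ Ioo a b, ∀ x ∈ closedBall (0 : ℂ) 1, G x t = 0 →
      deriv (G · (t : ℂ)) x ≠ 0 ∧ F x t = 0)
    {x y : ℂ} (hx : x ∈ ball (0 : ℂ) (1 / 2)) (hy : y ∈ Y) :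
    cauchyTransform (fun ξ => F ξ y / G ξ y) x * G x y = F x y := by
  have hx1 : x ∈ ball (0 : ℂ) 1 := ball_subset_ball (by norm_num) hx
  have hsphere : sphere (0 : ℂ) 1 ⊆ U := sphere_subset_closedBall.trans hsU
  have hxU : x ∈ U := hsU (ball_subset_closedBall hx1)
  have hdiff : DifferentiableOn ℂ (fun y => cauchyTransform (fun ξ => F ξ y / G ξ y) x) Y :=
    differentiableOn_cauchyTransform hY
      (fun ξ hξ => (hF₂ ξ (hsphere hξ)).div (hG₂ ξ (hsphere hξ)) fun y hy => hG_ne y hy ξ hξ)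
      (fun y hy => ((hF₁ y hy).continuousOn.mono hsphere).div ((hG₁ y hy).continuousOn.mono hsphere)
        (hG_ne y hy)) hM hx
  refine sub_eq_zero.mp (eqOn_zero_of_forall_mem_Ioo
    (((hdiff.mul (hG₂ x hxU)).sub (hF₂ x hxU)).analyticOnNhd hY) hY' hc (habY c hc)
    (fun t ht => sub_eq_zero.mpr ?_) hy)
  exact cauchyTransform_div_mul hU hsU (hF₁ t (habY t ht)) (hG₁ t (habY t ht))
    (hG_ne t (habY t ht)) (hz t ht) hx1

end Division

section ComplexifiedRe

/-- The holomorphic extension of `(x, y) ↦ re (G (x + i y))` to complex `x` and `y`. -/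
def complexifiedRe (G : ℂ → ℂ) (x y : ℂ) : ℂ :=
  (G (x + Complex.I * y) + conj (G (conj x + Complex.I * conj y))) / 2

variable {G H : ℂ → ℂ} {x y : ℂ}

theorem conj_mem_ball_zero {r : ℝ} (hx : x ∈ ball (0 : ℂ) r) : conj x ∈ ball (0 : ℂ) r := by
  rw [mem_ball_zero_iff] at hx ⊢
  rwa [Complex.norm_conj]

theorem ofReal_mem_ball_zero {t r : ℝ} : (t : ℂ) ∈ ball (0 : ℂ) r ↔ |t| < r := by
  rw [mem_ball_zero_iff, Complex.norm_real, Real.norm_eq_abs]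

theorem add_I_mul_mem_ball (hx : x ∈ ball (0 : ℂ) 2) (hy : y ∈ ball (0 : ℂ) 1) :
    x + Complex.I * y ∈ ball (0 : ℂ) 4 := by
  rw [mem_ball_zero_iff] at *
  refine (norm_add_le _ _).trans_lt ?_
  rw [norm_mul, Complex.norm_I, one_mul]
  linarith

theorem sub_I_mul_mem_ball (hx : x ∈ ball (0 : ℂ) 2) (hy : y ∈ ball (0 : ℂ) 1) :
    x - Complex.I * y ∈ ball (0 : ℂ) 4 := by
  rw [sub_eq_add_neg, ← mul_neg]
  exact add_I_mul_mem_ball hx (by rwa [mem_ball_zero_iff, norm_neg, ← mem_ball_zero_iff])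

theorem complexifiedRe_eq (G : ℂ → ℂ) (x y : ℂ) : complexifiedRe G x y =
    (G (x + Complex.I * y) + (conj ∘ G ∘ conj) (x - Complex.I * y)) / 2 := by
  simp [complexifiedRe, sub_eq_add_neg]

theorem complexifiedRe_ofReal (G : ℂ → ℂ) (x y : ℝ) :
    complexifiedRe G x y = ((G (x + Complex.I * y)).re : ℂ) := by
  rw [complexifiedRe, Complex.conj_ofReal, Complex.conj_ofReal, Complex.add_conj,
    Complex.ofReal_mul, Complex.ofReal_ofNat, mul_div_cancel_left₀ _ two_ne_zero]

theorem complexifiedRe_re_im (G : ℂ → ℂ) (z : ℂ) :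
    complexifiedRe G z.re z.im = ((G z).re : ℂ) := by
  rw [complexifiedRe_ofReal, mul_comm, Complex.re_add_im]

theorem complexifiedRe_conj (G : ℂ → ℂ) (x : ℂ) (y : ℝ) :
    complexifiedRe G (conj x) y = conj (complexifiedRe G x y) := by
  simp only [complexifiedRe, Complex.conj_ofReal, Complex.conj_conj, map_div₀, map_add]
  rw [add_comm, map_ofNat]

theorem complexifiedRe_sub (G H : ℂ → ℂ) (x y : ℂ) :
    complexifiedRe (fun z => G z - H z) x y = complexifiedRe G x y - complexifiedRe H x y := by
  simp only [complexifiedRe, map_sub]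
  ring

theorem norm_complexifiedRe_le {M : ℝ} (hG : ∀ z ∈ ball (0 : ℂ) 4, ‖G z‖ ≤ M)
    (hx : x ∈ ball (0 : ℂ) 2) (hy : y ∈ ball (0 : ℂ) 1) : ‖complexifiedRe G x y‖ ≤ M := by
  have hleft := hG _ (add_I_mul_mem_ball hx hy)
  have hright := hG _ (add_I_mul_mem_ball (conj_mem_ball_zero hx) (conj_mem_ball_zero hy))
  rw [complexifiedRe, norm_div, Complex.norm_ofNat, div_le_iff₀ two_pos]
  refine (norm_add_le _ _).trans ?_
  rw [Complex.norm_conj]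
  linarith

theorem norm_complexifiedRe_sub_le {ε : ℝ} (hGH : ∀ z ∈ ball (0 : ℂ) 4, ‖G z - H z‖ ≤ ε)
    (hx : x ∈ ball (0 : ℂ) 2) (hy : y ∈ ball (0 : ℂ) 1) :
    ‖complexifiedRe G x y - complexifiedRe H x y‖ ≤ ε := by
  rw [← complexifiedRe_sub]
  exact norm_complexifiedRe_le hGH hx hy

theorem differentiableOn_conj_conj {r : ℝ} (hG : DifferentiableOn ℂ G (ball 0 r)) :
    DifferentiableOn ℂ (conj ∘ G ∘ conj) (ball (0 : ℂ) r) := fun _ hz =>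
  (differentiableAt_conj_conj_iff.mpr (hG.differentiableAt
    (isOpen_ball.mem_nhds (conj_mem_ball_zero hz)))).differentiableWithinAt

theorem differentiableOn_complexifiedRe_prod (hG : DifferentiableOn ℂ G (ball 0 4)) :
    DifferentiableOn ℂ (fun p : ℂ × ℂ => complexifiedRe G p.1 p.2)
      (ball (0 : ℂ) 2 ×ˢ ball (0 : ℂ) 1) := by
  simp only [complexifiedRe_eq]
  have hleft : DifferentiableOn ℂ (fun p : ℂ × ℂ => G (p.1 + Complex.I * p.2))
      (ball (0 : ℂ) 2 ×ˢ ball (0 : ℂ) 1) :=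
    hG.comp (by fun_prop) fun p hp => add_I_mul_mem_ball hp.1 hp.2
  have hright : DifferentiableOn ℂ (fun p : ℂ × ℂ => (conj ∘ G ∘ conj) (p.1 - Complex.I * p.2))
      (ball (0 : ℂ) 2 ×ˢ ball (0 : ℂ) 1) :=
    (differentiableOn_conj_conj hG).comp (by fun_prop) fun p hp => sub_I_mul_mem_ball hp.1 hp.2
  simp only [div_eq_mul_inv]
  exact (hleft.fun_add hright).mul_const _

theorem differentiableOn_complexifiedRe_left (hG : DifferentiableOn ℂ G (ball 0 4))
    (hy : y ∈ ball (0 : ℂ) 1) : DifferentiableOn ℂ (complexifiedRe G · y) (ball 0 2) :=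
  (differentiableOn_complexifiedRe_prod hG).comp (f := fun x => (x, y)) (by fun_prop)
    fun _ hx => ⟨hx, hy⟩

theorem differentiableOn_complexifiedRe_right (hG : DifferentiableOn ℂ G (ball 0 4))
    (hx : x ∈ ball (0 : ℂ) 2) : DifferentiableOn ℂ (complexifiedRe G x) (ball 0 1) :=
  (differentiableOn_complexifiedRe_prod hG).comp (f := fun y => (x, y)) (by fun_prop)
    fun _ hy => ⟨hx, hy⟩

theorem hasDerivAt_complexifiedRe (hG : DifferentiableOn ℂ G (ball 0 4))
    (hx : x ∈ ball (0 : ℂ) 2) (hy : y ∈ ball (0 : ℂ) 1) :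
    HasDerivAt (complexifiedRe G · y) (complexifiedRe (deriv G) x y) x := by
  have hderiv : ∀ z ∈ ball (0 : ℂ) 4, HasDerivAt G (deriv G z) z := fun z hz =>
    (hG.differentiableAt (isOpen_ball.mem_nhds hz)).hasDerivAt
  simp only [complexifiedRe_eq]
  refine HasDerivAt.div_const (HasDerivAt.add ?_ ?_) 2
  · exact (hderiv _ (add_I_mul_mem_ball hx hy)).comp_add_const x (Complex.I * y)
  · have hconj := conj_mem_ball_zero (sub_I_mul_mem_ball hx hy)
    have := (hderiv _ hconj).conj_conj
    rw [Complex.conj_conj] at this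
    exact this.comp_sub_const x (Complex.I * y)

theorem norm_deriv_complexifiedRe_sub_le {ε : ℝ} (hG : DifferentiableOn ℂ G (ball 0 4))
    (hH : DifferentiableOn ℂ H (ball 0 4)) (hGH : ∀ z ∈ ball (0 : ℂ) 4, ‖G z - H z‖ ≤ ε)
    (hx : x ∈ ball (0 : ℂ) (3 / 2)) (hy : y ∈ ball (0 : ℂ) 1) :
    ‖complexifiedRe (deriv G) x y - complexifiedRe (deriv H) x y‖ ≤ 4 * ε := by
  have hsub : ball x (1 / 2) ⊆ ball 0 2 := ball_subset_ball' (by linarith [mem_ball.mp hx])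
  have hx2 := hsub (mem_ball_self (by norm_num))
  rw [← ((hasDerivAt_complexifiedRe hG hx2 hy).fun_sub (hasDerivAt_complexifiedRe hH hx2 hy)).deriv]
  refine (norm_deriv_le_of_norm_le_on_ball (d := 1 / 2) (by norm_num)
    (((differentiableOn_complexifiedRe_left hG hy).fun_sub
      (differentiableOn_complexifiedRe_left hH hy)).mono hsub)
    fun z hz => norm_complexifiedRe_sub_le hGH (hsub hz) hy).trans_eq ?_
  ring

theorem im_eq_zero_and_ne_zero_of_complexifiedRe_eq_zero {d x₀ : ℂ} {r ε t : ℝ}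
    (hG : DifferentiableOn ℂ G (ball 0 4)) (hH : DifferentiableOn ℂ H (ball 0 4))
    (hGH : ∀ z ∈ ball (0 : ℂ) 4, ‖G z - H z‖ ≤ ε) (hd : d ≠ 0) (hε : ε ≤ ‖d‖ / 16)
    (hx₀ : x₀.im = 0) (ht : (t : ℂ) ∈ ball (0 : ℂ) 1) (hsub : ball x₀ r ⊆ ball 0 (3 / 2))
    (hderiv : ∀ z ∈ ball x₀ r, complexifiedRe (deriv H) z t ∈ ball d (‖d‖ / 4))
    (hx : x ∈ ball x₀ r) (hzero : complexifiedRe G x t = 0) :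
    x.im = 0 ∧ complexifiedRe (deriv G) x t ≠ 0 := by
  have hd_pos := norm_pos_iff.mpr hd
  have hnear : ∀ z ∈ ball x₀ r, ‖complexifiedRe (deriv G) z t - d‖ ≤ ‖d‖ / 2 := fun z hz => by
    have hclose := norm_deriv_complexifiedRe_sub_le hG hH hGH (hsub hz) ht
    linarith [mem_ball_iff_norm.mp (hderiv z hz), norm_sub_le_norm_sub_add_norm_sub
      (complexifiedRe (deriv G) z t) (complexifiedRe (deriv H) z t) d]
  have hconj : conj x ∈ ball x₀ r := by
    rw [mem_ball, dist_eq_norm] at hx ⊢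
    rwa [← Complex.conj_eq_iff_im.mpr hx₀, ← map_sub, Complex.norm_conj]
  refine ⟨?_, fun h => ?_⟩
  · have hinj := half_norm_mul_norm_sub_le (convex_ball x₀ r) (fun z hz =>
      hasDerivAt_complexifiedRe hG (ball_subset_ball (by norm_num) (hsub hz)) ht) hnear hx hconj
    rw [complexifiedRe_conj, hzero, map_zero, sub_zero, norm_zero] at hinj
    have hnorm : ‖conj x - x‖ ≤ 0 := nonpos_of_mul_nonpos_right hinj (by positivity)
    exact Complex.conj_eq_iff_im.mp (sub_eq_zero.mp (norm_le_zero_iff.mp hnorm))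
  · have := hnear x hx
    rw [h, zero_sub, norm_neg] at this
    linarith

theorem continuousAt_complexifiedRe_real {t : ℝ} (hG : DifferentiableOn ℂ G (ball 0 4))
    (hx : x ∈ ball (0 : ℂ) 2) (ht : |t| < 1) :
    ContinuousAt (fun p : ℂ × ℝ => complexifiedRe G p.1 p.2) (x, t) :=
  ContinuousAt.comp (f := fun p : ℂ × ℝ => (p.1, (p.2 : ℂ))) (x := (x, t))
    ((differentiableOn_complexifiedRe_prod hG).continuousOn.continuousAt (prod_mem_nhds
      (isOpen_ball.mem_nhds hx) (isOpen_ball.mem_nhds (ofReal_mem_ball_zero.mpr ht))))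
    (by fun_prop)

theorem eventually_forall_complexifiedRe_ne_zero {x₀ : ℂ} {t₀ : ℝ}
    (hH : DifferentiableOn ℂ H (ball 0 4)) (hx₀ : x₀ ∈ ball (0 : ℂ) 2) (ht₀ : |t₀| < 1)
    (hne : complexifiedRe H x₀ t₀ ≠ 0) :
    ∀ᶠ p : ℝ × ℂ × ℝ in 𝓝 (0, x₀, t₀), ∀ G : ℂ → ℂ,
      (∀ z ∈ ball (0 : ℂ) 4, ‖G z - H z‖ ≤ p.1) → complexifiedRe G p.2.1 p.2.2 ≠ 0 := by
  have hpos : 0 < ‖complexifiedRe H x₀ t₀‖ / 2 := half_pos (norm_pos_iff.mpr hne)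
  have hcont : ContinuousAt (fun p : ℝ × ℂ × ℝ => ‖complexifiedRe H p.2.1 p.2.2‖) (0, x₀, t₀) :=
    (continuousAt_complexifiedRe_real hH hx₀ ht₀).norm.comp
      (f := Prod.snd) (x := ((0 : ℝ), x₀, t₀)) continuousAt_snd
  filter_upwards [continuousAt_fst.eventually_lt_const hpos,
    hcont.eventually_const_lt (half_lt_self (norm_pos_iff.mpr hne)),
    continuousAt_snd.fst.eventually_mem (isOpen_ball.mem_nhds hx₀),
    continuousAt_snd.snd.abs.eventually_lt_const ht₀] with p hp hfar hx ht
    G hGH hzero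
  have hclose := norm_complexifiedRe_sub_le hGH hx (ofReal_mem_ball_zero.mpr ht)
  rw [hzero, zero_sub, norm_neg] at hclose
  linarith

theorem eventually_forall_complexifiedRe_im_eq_zero {x₀ : ℂ} {t₀ : ℝ}
    (hH : DifferentiableOn ℂ H (ball 0 4)) (hx₀ : x₀ ∈ ball (0 : ℂ) (3 / 2)) (ht₀ : |t₀| < 1)
    (him : x₀.im = 0) (hne : complexifiedRe (deriv H) x₀ t₀ ≠ 0) :
    ∀ᶠ p : ℝ × ℂ × ℝ in 𝓝 (0, x₀, t₀), ∀ G : ℂ → ℂ, DifferentiableOn ℂ G (ball 0 4) →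
      (∀ z ∈ ball (0 : ℂ) 4, ‖G z - H z‖ ≤ p.1) → complexifiedRe G p.2.1 p.2.2 = 0 →
        p.2.1.im = 0 ∧ complexifiedRe (deriv G) p.2.1 p.2.2 ≠ 0 := by
  have hd := norm_pos_iff.mpr hne
  set d := complexifiedRe (deriv H) x₀ t₀
  have hcont : ContinuousAt (fun p : ℂ × ℝ => complexifiedRe (deriv H) p.1 p.2) (x₀, t₀) :=
    continuousAt_complexifiedRe_real (hH.deriv isOpen_ball)
      (ball_subset_ball (by norm_num) hx₀) ht₀
  have hnear : ∀ᶠ p : ℂ × ℝ in 𝓝 (x₀, t₀), p.1 ∈ ball (0 : ℂ) (3 / 2) ∧ |p.2| < 1 ∧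
      complexifiedRe (deriv H) p.1 p.2 ∈ ball d (‖d‖ / 4) :=
    (continuousAt_fst.eventually_mem (isOpen_ball.mem_nhds hx₀)).and
      (((continuous_snd.abs.tendsto (x₀, t₀)).eventually_lt_const ht₀).and
        (hcont.eventually_mem (ball_mem_nhds d (by positivity))))
  obtain ⟨r, hr, hball⟩ := Metric.eventually_nhds_iff_ball.mp hnear
  simp only [← ball_prod_same] at hball
  filter_upwards [continuousAt_fst.eventually_lt_const (show (0 : ℝ) < ‖d‖ / 16 by positivity),
    continuousAt_snd.eventually_mem (prod_mem_nhds (ball_mem_nhds x₀ hr) (ball_mem_nhds t₀ hr))]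
    with p hε hp G hG hGH hzero
  exact im_eq_zero_and_ne_zero_of_complexifiedRe_eq_zero hG hH hGH hne hε.le him
    (ofReal_mem_ball_zero.mpr (hball _ hp).2.1) (fun z hz => (hball (z, p.2.2) ⟨hz, hp.2⟩).1)
    (fun z hz => (hball (z, p.2.2) ⟨hz, hp.2⟩).2.2) hp.1 hzero

theorem eventually_complexifiedRe_zeros_real_simple {a b : ℝ} (ha : -1 < a) (hb : b < 1)
    (hH : DifferentiableOn ℂ H (ball 0 4))
    (hsimple : ∀ x : ℂ, ∀ t ∈ Icc a b, complexifiedRe H x t = 0 →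
      x.im = 0 ∧ complexifiedRe (deriv H) x t ≠ 0) :
    ∀ᶠ ε in 𝓝 (0 : ℝ), ∀ p ∈ closedBall (0 : ℂ) 1 ×ˢ Icc a b, ∀ G : ℂ → ℂ,
      DifferentiableOn ℂ G (ball 0 4) → (∀ z ∈ ball (0 : ℂ) 4, ‖G z - H z‖ ≤ ε) →
      complexifiedRe G p.1 p.2 = 0 → p.1.im = 0 ∧ complexifiedRe (deriv G) p.1 p.2 ≠ 0 := by
  refine ((isCompact_closedBall 0 1).prod isCompact_Icc).eventually_forall_of_forall_eventually ?_
  rintro ⟨x₀, t₀⟩ ⟨hx₀, ht₀⟩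
  have hx₀' : x₀ ∈ ball (0 : ℂ) (3 / 2) := closedBall_subset_ball (by norm_num) hx₀
  have ht₀' : |t₀| < 1 := abs_lt.mpr ⟨ha.trans_le ht₀.1, ht₀.2.trans_lt hb⟩
  by_cases hzero : complexifiedRe H x₀ t₀ = 0
  · obtain ⟨him, hne⟩ := hsimple x₀ t₀ ht₀ hzero
    exact eventually_forall_complexifiedRe_im_eq_zero hH hx₀' ht₀' him hne
  · filter_upwards [eventually_forall_complexifiedRe_ne_zero hH
      (ball_subset_ball (by norm_num) hx₀') ht₀' hzero] with p hp G _ hGH h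
    exact absurd h (hp G hGH)

theorem complexifiedRe_pow (m : ℕ) (x y : ℂ) : complexifiedRe (fun z => z ^ m) x y =
    ((x + Complex.I * y) ^ m + (x - Complex.I * y) ^ m) / 2 := by
  simp [complexifiedRe, sub_eq_add_neg]

theorem complexifiedRe_deriv_pow (m : ℕ) (x y : ℂ) :
    complexifiedRe (deriv fun z => z ^ m) x y =
      m * complexifiedRe (fun z => z ^ (m - 1)) x y := by
  simp only [complexifiedRe, deriv_pow_field, map_mul, map_natCast]
  ring

theorem complexifiedRe_pow_zeros_real_simple {m : ℕ} {t : ℝ} (ht : t ≠ 0)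
    (hzero : complexifiedRe (fun z => z ^ m) x t = 0) :
    x.im = 0 ∧ complexifiedRe (deriv fun z => z ^ m) x t ≠ 0 := by
  have hIt : Complex.I * (t : ℂ) ≠ 0 := mul_ne_zero Complex.I_ne_zero (by exact_mod_cast ht)
  rw [complexifiedRe_pow, div_eq_zero_iff, or_iff_left two_ne_zero] at hzero
  have hm : m ≠ 0 := by
    rintro rfl
    norm_num at hzero
  have hpow : (x + Complex.I * t) ^ m = -(x - Complex.I * t) ^ m :=
    eq_neg_of_add_eq_zero_left hzero
  have hnorm : ‖x + Complex.I * t‖ = ‖x - Complex.I * t‖ := by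
    rw [← pow_left_inj₀ (norm_nonneg _) (norm_nonneg _) hm, ← norm_pow, hpow, norm_neg, norm_pow]
  refine ⟨?_, fun hderiv => ?_⟩
  · have hsq := congrArg (· ^ 2) hnorm
    simp only [Complex.sq_norm, Complex.normSq_apply, Complex.add_re, Complex.sub_re,
      Complex.add_im, Complex.sub_im, Complex.I_mul_re, Complex.I_mul_im, Complex.ofReal_re,
      Complex.ofReal_im] at hsq
    exact (mul_eq_zero.mp (show t * x.im = 0 by linarith)).resolve_left ht
  · rw [complexifiedRe_deriv_pow, complexifiedRe_pow, mul_eq_zero,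
      or_iff_right (by exact_mod_cast hm), div_eq_zero_iff, or_iff_left two_ne_zero] at hderiv
    have hprod : (x - Complex.I * t) ^ (m - 1) * (2 * (Complex.I * t)) = 0 := by
      rw [← Nat.sub_add_cancel (Nat.one_le_iff_ne_zero.mpr hm), pow_succ, pow_succ,
        eq_neg_of_add_eq_zero_left hderiv] at hpow
      linear_combination -hpow
    have hsub : x - Complex.I * t = 0 := eq_zero_of_pow_eq_zero
      ((mul_eq_zero.mp hprod).resolve_right (mul_ne_zero two_ne_zero hIt))
    rw [hsub, norm_zero, norm_eq_zero] at hnorm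
    exact hIt (by linear_combination (hnorm - hsub) / 2)

end ComplexifiedRe

section LocalQuotient

/-- The complexifications of `re G` and `re H` are defined on the polydisc `|x| < 2`, `|y| < δ`,
and their quotient is bounded by `M` on the part `|x| = 1` of it, from which Cauchy's formula in `x`
recovers the quotient near the origin. -/
structure HasQuotientBound (G H : ℂ → ℂ) (δ M : ℝ) : Prop where
  le_one : δ ≤ 1
  differentiableOn_left : DifferentiableOn ℂ G (ball 0 4)
  differentiableOn_right : DifferentiableOn ℂ H (ball 0 4)
  ne_zero : ∀ y ∈ ball (0 : ℂ) δ, ∀ ξ ∈ sphere (0 : ℂ) 1, complexifiedRe G ξ y ≠ 0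
  norm_div_le : ∀ y ∈ ball (0 : ℂ) δ, ∀ ξ ∈ sphere (0 : ℂ) 1,
    ‖complexifiedRe H ξ y / complexifiedRe G ξ y‖ ≤ M

/-- The extension of `re H / re G` across the zeros of `re G`, given by Cauchy's formula in the
first complexified variable. -/
def quotientExtension (G H : ℂ → ℂ) (z : ℂ) : ℂ :=
  cauchyTransform (fun ξ => complexifiedRe H ξ z.im / complexifiedRe G ξ z.im) z.re

variable {G H : ℂ → ℂ} {δ M : ℝ} {z w : ℂ}

theorem ofReal_re_mem_ball {r : ℝ} (h : w ∈ ball z r) : (w.re : ℂ) ∈ ball (z.re : ℂ) r := by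
  rw [mem_ball_iff_norm] at *
  rw [← Complex.ofReal_sub, ← Complex.sub_re, Complex.norm_real]
  exact (Complex.abs_re_le_norm _).trans_lt h

theorem ofReal_im_mem_ball {r : ℝ} (h : w ∈ ball z r) : (w.im : ℂ) ∈ ball (z.im : ℂ) r := by
  rw [mem_ball_iff_norm] at *
  rw [← Complex.ofReal_sub, ← Complex.sub_im, Complex.norm_real]
  exact (Complex.abs_im_le_norm _).trans_lt h

theorem ofReal_im_mem_ball_of_mem_ball_half (hz : z ∈ ball (0 : ℂ) (δ / 2)) :
    (z.im : ℂ) ∈ ball (0 : ℂ) δ :=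
  have hδ : 0 < δ / 2 := dist_nonneg.trans_lt (mem_ball.mp hz)
  ball_subset_ball (by linarith) (ofReal_im_mem_ball hz)

theorem mem_ball_zero_two {ξ : ℂ} (hξ : ξ ∈ closedBall (0 : ℂ) 1) : ξ ∈ ball (0 : ℂ) 2 :=
  closedBall_subset_ball one_lt_two hξ

namespace HasQuotientBound

theorem ofReal_re_mem_ball_half (h : HasQuotientBound G H δ M) (hz : z ∈ ball (0 : ℂ) (δ / 2)) :
    (z.re : ℂ) ∈ ball (0 : ℂ) (1 / 2) :=
  ball_subset_ball (div_le_div_of_nonneg_right h.le_one two_pos.le) (ofReal_re_mem_ball hz)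

theorem norm_quotientExtension_le (h : HasQuotientBound G H δ M)
    (hz : z ∈ ball (0 : ℂ) (δ / 2)) : ‖quotientExtension G H z‖ ≤ 2 * M :=
  norm_cauchyTransform_le (h.ofReal_re_mem_ball_half hz)
    (h.norm_div_le _ (ofReal_im_mem_ball_of_mem_ball_half hz))

theorem norm_quotientExtension_sub_le (h : HasQuotientBound G H δ M)
    (hz : z ∈ ball (0 : ℂ) (δ / 2)) (hw : w ∈ ball (0 : ℂ) (δ / 2)) (hwz : w ∈ ball z (δ / 2)) :
    ‖quotientExtension G H w - quotientExtension G H z‖ ≤ (4 * M + 8 * M / δ) * ‖w - z‖ := by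
  have hδ : 0 < δ := by linarith [dist_nonneg.trans_lt (mem_ball.mp hz)]
  have hball : ball (0 : ℂ) δ ⊆ ball 0 1 := ball_subset_ball h.le_one
  have hsphere : sphere (0 : ℂ) 1 ⊆ ball 0 2 := fun ξ hξ =>
    mem_ball_zero_two (sphere_subset_closedBall hξ)
  have hM : 0 ≤ M := (norm_nonneg _).trans
    (h.norm_div_le 0 (mem_ball_self hδ) 1 (mem_sphere_zero_iff_norm.mpr norm_one))
  have hbound := norm_cauchyTransform_sub_cauchyTransform_le
    (w := fun ξ y => complexifiedRe H ξ y / complexifiedRe G ξ y)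
    (fun ξ hξ => ((differentiableOn_complexifiedRe_right h.differentiableOn_right
      (hsphere hξ)).mono hball).fun_div ((differentiableOn_complexifiedRe_right
        h.differentiableOn_left (hsphere hξ)).mono hball) fun y hy => h.ne_zero y hy ξ hξ)
    (fun y hy => ((differentiableOn_complexifiedRe_left h.differentiableOn_right
      (hball hy)).continuousOn.mono hsphere).div ((differentiableOn_complexifiedRe_left
        h.differentiableOn_left (hball hy)).continuousOn.mono hsphere) (h.ne_zero y hy))
    h.norm_div_le (h.ofReal_re_mem_ball_half hw) (h.ofReal_re_mem_ball_half hz)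
    (ofReal_im_mem_ball hz) (ofReal_im_mem_ball hwz)
  rw [← Complex.ofReal_sub, ← Complex.ofReal_sub, ← Complex.sub_re, ← Complex.sub_im,
    Complex.norm_real, Complex.norm_real] at hbound
  refine hbound.trans ?_
  rw [add_mul]
  gcongr
  · exact Complex.abs_re_le_norm _
  · exact Complex.abs_im_le_norm _

theorem quotientExtension_mul_re (h : HasQuotientBound G H δ M) {a b : ℝ} (hab : a < b)
    (haδ : -δ ≤ a) (hbδ : b ≤ δ)
    (hsimple : ∀ t ∈ Ioo a b, ∀ x ∈ closedBall (0 : ℂ) 1, complexifiedRe G x t = 0 →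
      x.im = 0 ∧ complexifiedRe (deriv G) x t ≠ 0)
    (hGH : ∀ z ∈ ball (0 : ℂ) 4, (G z).re = 0 → (H z).re = 0) (hz : z ∈ ball (0 : ℂ) (δ / 2)) :
    quotientExtension G H z * (G z).re = (H z).re := by
  have hball : ball (0 : ℂ) δ ⊆ ball 0 1 := ball_subset_ball h.le_one
  have hIoo : ∀ t ∈ Ioo a b, (t : ℂ) ∈ ball (0 : ℂ) δ := fun t ht =>
    ofReal_mem_ball_zero.mpr (abs_lt.mpr ⟨haδ.trans_lt ht.1, ht.2.trans_le hbδ⟩)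
  have hzeros : ∀ t ∈ Ioo a b, ∀ x ∈ closedBall (0 : ℂ) 1, complexifiedRe G x t = 0 →
      deriv (complexifiedRe G · (t : ℂ)) x ≠ 0 ∧ complexifiedRe H x t = 0 := by
    intro t ht x hx hzero
    obtain ⟨him, hderiv⟩ := hsimple t ht x hx hzero
    have hx2 := mem_ball_zero_two hx
    have ht1 := hball (hIoo t ht)
    refine ⟨by rwa [(hasDerivAt_complexifiedRe h.differentiableOn_left hx2 ht1).deriv], ?_⟩
    obtain ⟨s, rfl⟩ : ∃ s : ℝ, (s : ℂ) = x := ⟨x.re, Complex.ext rfl him.symm⟩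
    rw [complexifiedRe_ofReal, Complex.ofReal_eq_zero] at hzero ⊢
    exact hGH _ (add_I_mul_mem_ball hx2 ht1) hzero
  obtain ⟨c, hc⟩ := nonempty_Ioo.mpr hab
  rw [← complexifiedRe_re_im G, ← complexifiedRe_re_im H]
  exact cauchyTransform_div_mul_of_Ioo isOpen_ball (fun _ => mem_ball_zero_two) isOpen_ball
    (convex_ball _ _).isPreconnected hc hIoo
    (fun y hy => differentiableOn_complexifiedRe_left h.differentiableOn_right (hball hy))
    (fun y hy => differentiableOn_complexifiedRe_left h.differentiableOn_left (hball hy))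
    (fun x hx => (differentiableOn_complexifiedRe_right h.differentiableOn_right hx).mono hball)
    (fun x hx => (differentiableOn_complexifiedRe_right h.differentiableOn_left hx).mono hball)
    h.ne_zero h.norm_div_le hzeros (h.ofReal_re_mem_ball_half hz)
    (ofReal_im_mem_ball_of_mem_ball_half hz)

theorem abs_re_div_re_le_and_norm_fderiv_le (h : HasQuotientBound G H δ M)
    (hmul : ∀ z ∈ ball (0 : ℂ) (δ / 2), quotientExtension G H z * (G z).re = (H z).re)
    (hz : z ∈ ball (0 : ℂ) (δ / 2)) (hne : (G z).re ≠ 0) :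
    |(H z).re / (G z).re| ≤ 2 * M ∧
      ‖fderiv ℝ (fun w => (H w).re / (G w).re) z‖ ≤ 4 * M + 8 * M / δ := by
  have hδ : 0 < δ / 2 := dist_nonneg.trans_lt (mem_ball.mp hz)
  have heq : ∀ w ∈ ball (0 : ℂ) (δ / 2), (G w).re ≠ 0 →
      (((H w).re / (G w).re : ℝ) : ℂ) = quotientExtension G H w := fun w hw hw0 => by
    rw [Complex.ofReal_div, ← hmul w hw, mul_div_cancel_right₀ _ (by exact_mod_cast hw0)]
  have hvalue := h.norm_quotientExtension_le hz
  rw [← heq z hz hne, Complex.norm_real, Real.norm_eq_abs] at hvalue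
  have hM : 0 ≤ M := by linarith [hvalue, abs_nonneg ((H z).re / (G z).re)]
  have hδ0 : 0 < δ := by linarith
  refine ⟨hvalue, norm_fderiv_le_of_lip' ℝ (by positivity) ?_⟩
  have hz4 : ball (0 : ℂ) 4 ∈ 𝓝 z :=
    isOpen_ball.mem_nhds (ball_subset_ball (by linarith [h.le_one]) hz)
  filter_upwards [(Complex.continuous_re.continuousAt.comp
      (h.differentiableOn_left.continuousOn.continuousAt hz4)).eventually_ne hne,
    isOpen_ball.mem_nhds hz, ball_mem_nhds z hδ] with w hw0 hw hwz
  rw [← Complex.norm_real, Complex.ofReal_sub, heq w hw hw0, heq z hz hne]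
  exact h.norm_quotientExtension_sub_le hz hw hwz

end HasQuotientBound

theorem eventually_half_lt_norm_complexifiedRe_pow (m : ℕ) :
    ∀ᶠ y in 𝓝 (0 : ℂ), ∀ ξ ∈ sphere (0 : ℂ) 1, 1 / 2 < ‖complexifiedRe (fun z => z ^ m) ξ y‖ := by
  refine (isCompact_sphere (0 : ℂ) 1).eventually_forall_of_forall_eventually fun ξ hξ => ?_
  have hcont : Continuous fun p : ℂ × ℂ => ‖complexifiedRe (fun z => z ^ m) p.2 p.1‖ := by
    simp only [complexifiedRe_pow]
    fun_prop
  refine (hcont.tendsto (0, ξ)).eventually_const_lt ?_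
  rw [mem_sphere_zero_iff_norm] at hξ
  norm_num [complexifiedRe_pow, hξ]

theorem hasQuotientBound_of_norm_sub_pow_le {m : ℕ} (hδ1 : δ ≤ 1)
    (hpow : ∀ y ∈ ball (0 : ℂ) δ, ∀ ξ ∈ sphere (0 : ℂ) 1,
      1 / 2 < ‖complexifiedRe (fun z => z ^ m) ξ y‖)
    (hG : DifferentiableOn ℂ G (ball 0 4)) (hH : DifferentiableOn ℂ H (ball 0 4))
    (hGm : ∀ z ∈ ball (0 : ℂ) 4, ‖G z - z ^ m‖ ≤ 1 / 4) (hH1 : ∀ z ∈ ball (0 : ℂ) 4, ‖H z‖ ≤ 1) :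
    HasQuotientBound G H δ 4 := by
  have hlower : ∀ y ∈ ball (0 : ℂ) δ, ∀ ξ ∈ sphere (0 : ℂ) 1, 1 / 4 < ‖complexifiedRe G ξ y‖ := by
    intro y hy ξ hξ
    have hclose := norm_complexifiedRe_sub_le hGm
      (mem_ball_zero_two (sphere_subset_closedBall hξ)) (ball_subset_ball hδ1 hy)
    rw [norm_sub_rev] at hclose
    linarith [hpow y hy ξ hξ, norm_sub_norm_le (complexifiedRe (fun z => z ^ m) ξ y)
      (complexifiedRe G ξ y)]
  refine ⟨hδ1, hG, hH, fun y hy ξ hξ => norm_pos_iff.mp ?_, fun y hy ξ hξ => ?_⟩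
  · linarith [hlower y hy ξ hξ]
  · have hupper := norm_complexifiedRe_le hH1
      (mem_ball_zero_two (sphere_subset_closedBall hξ)) (ball_subset_ball hδ1 hy)
    have := hlower y hy ξ hξ
    rw [norm_div, div_le_iff₀ (by linarith)]
    linarith

/-- Near `0` the quotient `re H / re G` and its gradient are bounded by `C`, for all `G` which are
`ε`-close to `z ^ m` and all `H` bounded by `1` whose real parts vanish where that of `G` does. -/
def IsLocalQuotientBound (m : ℕ) (ε δ C : ℝ) : Prop :=
  ∀ G H : ℂ → ℂ, DifferentiableOn ℂ G (ball 0 4) → DifferentiableOn ℂ H (ball 0 4) →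
    (∀ z ∈ ball (0 : ℂ) 4, ‖G z - z ^ m‖ ≤ ε) → (∀ z ∈ ball (0 : ℂ) 4, ‖H z‖ ≤ 1) →
    (∀ z ∈ ball (0 : ℂ) 4, (G z).re = 0 → (H z).re = 0) →
    ∀ z ∈ ball (0 : ℂ) δ, (G z).re ≠ 0 → |(H z).re / (G z).re| ≤ C ∧
      ‖fderiv ℝ (fun w => (H w).re / (G w).re) z‖ ≤ C

theorem exists_isLocalQuotientBound (m : ℕ) :
    ∃ ε > (0 : ℝ), ∃ δ ∈ Ioc (0 : ℝ) 4, ∃ C : ℝ, IsLocalQuotientBound m ε δ C := by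
  obtain ⟨r, hr, hpow⟩ :=
    Metric.eventually_nhds_iff_ball.mp (eventually_half_lt_norm_complexifiedRe_pow m)
  set δ := min r 1
  have hδ : 0 < δ := lt_min hr one_pos
  have hδ1 : δ ≤ 1 := min_le_right _ _
  have hsimple := eventually_complexifiedRe_zeros_real_simple (H := fun z => z ^ m) (a := δ / 3)
    (b := 2 * δ / 3) (by linarith) (by linarith) (differentiableOn_pow m)
    fun x t ht => complexifiedRe_pow_zeros_real_simple (by linarith [ht.1] : 0 < t).ne'
  obtain ⟨ε, hε, hε_pos, hε_le⟩ := ((hsimple.filter_mono nhdsWithin_le_nhds).and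
    (Ioc_mem_nhdsGT (show (0 : ℝ) < 1 / 4 by norm_num))).exists
  refine ⟨ε, hε_pos, δ / 2, ⟨half_pos hδ, by linarith⟩, 16 + 32 / δ,
    fun G H hG hH hGm hH1 hGH z hz hne => ?_⟩
  have hbound := hasQuotientBound_of_norm_sub_pow_le hδ1
    (fun y hy => hpow y (ball_subset_ball (min_le_left _ _) hy)) hG hH
    (fun z hz => (hGm z hz).trans hε_le) hH1
  obtain ⟨hvalue, hfderiv⟩ := hbound.abs_re_div_re_le_and_norm_fderiv_le
    (fun w => hbound.quotientExtension_mul_re (a := δ / 3) (b := 2 * δ / 3) (by linarith)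
      (by linarith) (by linarith)
      (fun t ht x hx => hε (x, t) ⟨hx, Ioo_subset_Icc_self ht⟩ G hG hGm) hGH) hz hne
  have : 0 < 32 / δ := by positivity
  exact ⟨by linarith, by linarith⟩

end LocalQuotient

section LocalQuotientConvergence

theorem exists_norm_eq_one_mul_pow_eq_ofReal {c : ℂ} {n : ℕ} (hc : c ≠ 0)
    (hn : n = 0 → c.im = 0) : ∃ e : ℂ, ‖e‖ = 1 ∧ ∃ q : ℝ, q ≠ 0 ∧ c * e ^ n = q := by
  rcases Nat.eq_zero_or_pos n with rfl | hpos
  · obtain ⟨q, rfl⟩ : ∃ q : ℝ, (q : ℂ) = c := ⟨c.re, Complex.ext rfl (hn rfl).symm⟩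
    exact ⟨1, norm_one, q, by exact_mod_cast hc, by rw [pow_zero, mul_one]⟩
  · have hc_norm : ‖c‖ ≠ 0 := norm_ne_zero_iff.mpr hc
    obtain ⟨e, he⟩ := IsAlgClosed.exists_pow_nat_eq ((‖c‖ : ℂ) / c) hpos
    refine ⟨e, ?_, ‖c‖, hc_norm, by rw [he, mul_div_cancel₀ _ hc]⟩
    rw [← pow_eq_one_iff_of_nonneg (norm_nonneg e) hpos.ne', ← norm_pow, he, norm_div,
      Complex.norm_real, norm_norm, div_self hc_norm]

theorem differentiableAt_re_div_re {F G : ℂ → ℂ} {z : ℂ} (hF : DifferentiableAt ℂ F z)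
    (hG : DifferentiableAt ℂ G z) (hne : (G z).re ≠ 0) :
    DifferentiableAt ℝ (fun w => (F w).re / (G w).re) z := by
  have hre {f : ℂ → ℂ} (hf : DifferentiableAt ℂ f z) :
      DifferentiableAt ℝ (fun w => (f w).re) z :=
    Complex.reCLM.differentiableAt.comp z (hf.restrictScalars ℝ)
  simpa only [div_eq_mul_inv] using (hre hF).fun_mul ((hre hG).fun_inv hne)

theorem add_mul_mem_ball {x σ w : ℂ} {r : ℝ} (hσ : σ ≠ 0) (hw : w ∈ ball (0 : ℂ) r) :
    x + σ * w ∈ ball x (‖σ‖ * r) := by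
  rw [mem_ball_zero_iff] at hw
  rw [mem_ball_iff_norm, add_sub_cancel_left, norm_mul]
  exact mul_lt_mul_of_pos_left hw (norm_pos_iff.mpr hσ)

theorem exists_rescaling_close_pow {f : ℂ → ℂ} {x : ℂ} (hf : AnalyticAt ℂ f x)
    (hne : ¬ ∀ᶠ z in 𝓝 x, f z = 0) (him : (f x).im = 0) :
    ∃ n : ℕ, ∃ e : ℂ, ‖e‖ = 1 ∧ ∃ q : ℝ, q ≠ 0 ∧ ∀ ε > 0, ∀ᶠ s : ℝ in 𝓝[>] 0,
      ∀ w ∈ ball (0 : ℂ) 4, ‖f (x + s * e * w) / (q * s ^ n : ℝ) - w ^ n‖ ≤ ε := by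
  obtain ⟨n, h, hh, hhx, hfactor⟩ := hf.exists_eventuallyEq_pow_smul_nonzero_iff.mpr hne
  obtain ⟨e, he, q, hq, hqe⟩ := exists_norm_eq_one_mul_pow_eq_ofReal hhx (n := n) fun hn => by
    rwa [hfactor.self_of_nhds, hn, pow_zero, one_smul] at him
  refine ⟨n, e, he, q, hq, fun ε hε => ?_⟩
  have hcont : ContinuousAt (fun z => h z / h x) x := hh.continuousAt.div_const _
  have hclose : ∀ᶠ z in 𝓝 x, h z / h x ∈ ball 1 (ε / 4 ^ n) :=
    hcont.eventually_mem (div_self hhx ▸ ball_mem_nhds _ (by positivity))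
  obtain ⟨η, hη, hball⟩ := Metric.eventually_nhds_iff_ball.mp (hfactor.and hclose)
  filter_upwards [Ioo_mem_nhdsGT (show 0 < η / 4 by positivity)] with s ⟨hs, hsη⟩ w hw
  have hσ : ‖s * e‖ = s := by rw [norm_mul, he, mul_one, Complex.norm_of_nonneg hs.le]
  obtain ⟨heq, hnear⟩ := hball (x + s * e * w) (ball_subset_ball (by rw [hσ]; linarith)
    (add_mul_mem_ball (norm_pos_iff.mp (hσ.symm ▸ hs)) hw))
  have hs' : (s : ℂ) ≠ 0 := by exact_mod_cast hs.ne'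
  have hq' : (q : ℂ) ≠ 0 := by exact_mod_cast hq
  have hdiff : f (x + s * e * w) / (q * s ^ n : ℝ) - w ^ n =
      w ^ n * (h (x + s * e * w) / h x - 1) := by
    rw [heq, add_sub_cancel_left, smul_eq_mul, mul_sub, mul_one, sub_left_inj,
      div_eq_iff (by exact_mod_cast mul_ne_zero hq (pow_ne_zero n hs.ne'))]
    push_cast
    rw [← hqe, mul_pow, mul_pow]
    field
  rw [mem_ball_zero_iff] at hw
  rw [mem_ball_iff_norm] at hnear
  calc ‖f (x + s * e * w) / (q * s ^ n : ℝ) - w ^ n‖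
      = ‖w‖ ^ n * ‖h (x + s * e * w) / h x - 1‖ := by rw [hdiff, norm_mul, norm_pow]
    _ ≤ 4 ^ n * (ε / 4 ^ n) := by gcongr
    _ = ε := mul_div_cancel₀ _ (by positivity)

theorem exists_rescaling_sub_close_pow {G : ℂ → ℂ} {x : ℂ}
    (hG : DifferentiableOn ℂ G (ball 0 1)) (hne : (reNeZero G).Nonempty)
    (hx : x ∈ ball (0 : ℂ) 1) :
    ∃ n : ℕ, ∃ e : ℂ, ‖e‖ = 1 ∧ ∃ q : ℝ, q ≠ 0 ∧ ∀ ε > 0, ∀ᶠ s : ℝ in 𝓝[>] 0,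
      ∀ w ∈ ball (0 : ℂ) 4,
        ‖(G (x + s * e * w) - (G x).im * Complex.I) / (q * s ^ n : ℝ) - w ^ n‖ ≤ ε := by
  have hshift : AnalyticOnNhd ℂ (fun z => G z - (G x).im * Complex.I) (ball 0 1) :=
    (hG.sub_const _).analyticOnNhd isOpen_ball
  have hnot_zero : ¬ ∀ᶠ z in 𝓝 x, G z - (G x).im * Complex.I = 0 := fun h => by
    obtain ⟨z, hz, hz0⟩ := hne
    have hconst : G z - (G x).im * Complex.I = 0 :=
      hshift.eqOn_zero_of_preconnected_of_eventuallyEq_zero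
        (convex_ball (0 : ℂ) 1).isPreconnected hx h hz
    exact hz0 (by rw [sub_eq_zero.mp hconst, Complex.re_ofReal_mul, Complex.I_re, mul_zero])
  have him : (G x - (G x).im * Complex.I).im = 0 := by
    rw [Complex.sub_im, Complex.im_ofReal_mul, Complex.I_im, mul_one, sub_self]
  exact exists_rescaling_close_pow (f := fun z => G z - (G x).im * Complex.I) (hshift x hx)
    hnot_zero him

theorem norm_fderiv_le_of_eq_mul_comp {f g : ℂ → ℝ} {c : ℝ} {x z σ : ℂ}
    (hf : ∀ w, f w = c * g ((w - x) / σ)) (hg : DifferentiableAt ℝ g ((z - x) / σ)) :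
    ‖fderiv ℝ f z‖ ≤ |c| * (‖fderiv ℝ g ((z - x) / σ)‖ / ‖σ‖) := by
  have hscale : DifferentiableAt ℝ (fun w => (w - x) / σ) z := by fun_prop
  have hscale_norm : ‖fderiv ℝ (fun w => (w - x) / σ) z‖ ≤ ‖σ‖⁻¹ := by
    refine norm_fderiv_le_of_lip' ℝ (by positivity) (Eventually.of_forall fun w => ?_)
    rw [← sub_div, sub_sub_sub_cancel_right, norm_div, div_eq_inv_mul]
  rw [show f = fun w => c * (g ∘ fun w => (w - x) / σ) w from funext hf,
    fderiv_const_mul (hg.comp z hscale), fderiv_comp z hg hscale, norm_smul, Real.norm_eq_abs,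
    div_eq_mul_inv]
  refine mul_le_mul_of_nonneg_left ?_ (abs_nonneg c)
  exact (ContinuousLinearMap.opNorm_comp_le _ _).trans
    (mul_le_mul_of_nonneg_left hscale_norm (norm_nonneg _))

theorem re_sub_mul_I_div_ofReal (w : ℂ) (b κ : ℝ) :
    ((w - b * Complex.I) / κ).re = w.re / κ := by
  rw [Complex.div_ofReal_re, Complex.sub_re, Complex.re_ofReal_mul, Complex.I_re, mul_zero,
    sub_zero]

theorem add_mul_sub_div_cancel {x z σ : ℂ} (hσ : σ ≠ 0) : x + σ * ((z - x) / σ) = z := by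
  rw [mul_div_cancel₀ _ hσ, add_sub_cancel]

theorem IsLocalQuotientBound.of_rescaling {F G : ℂ → ℂ} {x σ : ℂ} {n : ℕ} {ε δ C κ A b : ℝ}
    (hC : IsLocalQuotientBound n ε δ C) (hδ : δ ≤ 4) (hσ : σ ≠ 0) (hκ : κ ≠ 0) (hA : 0 < A)
    (hF : DifferentiableOn ℂ F (ball x (‖σ‖ * 4))) (hG : DifferentiableOn ℂ G (ball x (‖σ‖ * 4)))
    (hFA : ∀ z ∈ ball x (‖σ‖ * 4), ‖F z‖ ≤ A)
    (hclose : ∀ w ∈ ball (0 : ℂ) 4, ‖(G (x + σ * w) - b * Complex.I) / κ - w ^ n‖ ≤ ε)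
    (hFG : ∀ z ∈ ball x (‖σ‖ * 4), (G z).re = 0 → (F z).re = 0) :
    ∀ z ∈ ball x (‖σ‖ * δ), (G z).re ≠ 0 → |(F z).re / (G z).re| ≤ |A / κ| * C ∧
      ‖fderiv ℝ (fun w => (F w).re / (G w).re) z‖ ≤ |A / κ| * (C / ‖σ‖) := by
  intro z hz hne
  set Gs : ℂ → ℂ := fun w => (G (x + σ * w) - b * Complex.I) / κ
  set Fs : ℂ → ℂ := fun w => F (x + σ * w) / A with hFs
  have hmaps : MapsTo (fun w => x + σ * w) (ball 0 4) (ball x (‖σ‖ * 4)) := fun w hw =>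
    add_mul_mem_ball hσ hw
  have hGs_re : ∀ w, (Gs w).re = (G (x + σ * w)).re / κ := fun w => re_sub_mul_I_div_ofReal _ _ _
  have hFs_re : ∀ w, (Fs w).re = (F (x + σ * w)).re / A := fun w => Complex.div_ofReal_re _ _
  have hGs_diff : DifferentiableOn ℂ Gs (ball 0 4) :=
    ((hG.fun_comp (by fun_prop) hmaps).sub_const _).div_const _
  have hFs_diff : DifferentiableOn ℂ Fs (ball 0 4) :=
    (hF.fun_comp (by fun_prop) hmaps).div_const _
  have hFs_norm : ∀ w ∈ ball (0 : ℂ) 4, ‖Fs w‖ ≤ 1 := fun w hw => by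
    rw [hFs, norm_div, Complex.norm_of_nonneg hA.le, div_le_one hA]
    exact hFA _ (hmaps hw)
  have hzeros : ∀ w ∈ ball (0 : ℂ) 4, (Gs w).re = 0 → (Fs w).re = 0 := fun w hw h => by
    rw [hGs_re, div_eq_zero_iff, or_iff_left hκ] at h
    rw [hFs_re, hFG _ (hmaps hw) h, zero_div]
  have hquot : ∀ w, (F w).re / (G w).re =
      A / κ * ((Fs ((w - x) / σ)).re / (Gs ((w - x) / σ)).re) := fun w => by
    rw [hGs_re, hFs_re, add_mul_sub_div_cancel hσ]
    field
  have hzδ : (z - x) / σ ∈ ball (0 : ℂ) δ := by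
    rwa [mem_ball_zero_iff, norm_div, div_lt_iff₀' (norm_pos_iff.mpr hσ), ← mem_ball_iff_norm]
  have hz4 : ball (0 : ℂ) 4 ∈ 𝓝 ((z - x) / σ) := isOpen_ball.mem_nhds (ball_subset_ball hδ hzδ)
  have hGz : (Gs ((z - x) / σ)).re ≠ 0 := by
    simpa only [hGs_re, add_mul_sub_div_cancel hσ] using div_ne_zero hne hκ
  obtain ⟨hvalue, hgrad⟩ := hC Gs Fs hGs_diff hFs_diff hclose hFs_norm hzeros _ hzδ hGz
  refine ⟨?_, (norm_fderiv_le_of_eq_mul_comp hquot (differentiableAt_re_div_re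
    (hFs_diff.differentiableAt hz4) (hGs_diff.differentiableAt hz4) hGz)).trans (by gcongr)⟩
  rw [hquot, abs_mul]
  gcongr

theorem eventually_norm_le_add_one_of_tendstoUniformlyOn {ι : Type*} {l : Filter ι}
    {F : ι → ℂ → ℂ} {F₀ : ℂ → ℂ} {K : Set ℂ} {A : ℝ} (hF : TendstoUniformlyOn F F₀ l K)
    (hA : ∀ z ∈ K, ‖F₀ z‖ ≤ A) : ∀ᶠ k in l, ∀ z ∈ K, ‖F k z‖ ≤ A + 1 := by
  filter_upwards [Metric.tendstoUniformlyOn_iff.mp hF 1 one_pos] with k hk z hz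
  have hdist := hk z hz
  rw [dist_eq_norm_sub'] at hdist
  linarith [norm_sub_norm_le (F k z) (F₀ z), hA z hz]

theorem eventually_norm_sub_div_le_of_tendstoUniformlyOn {ι : Type*} {l : Filter ι}
    {G : ι → ℂ → ℂ} {G₀ : ℂ → ℂ} {K : Set ℂ} {κ ε : ℝ} (hG : TendstoUniformlyOn G G₀ l K)
    (hκ : κ ≠ 0) (hε : 0 < ε) : ∀ᶠ k in l, ∀ z ∈ K, ‖(G k z - G₀ z) / κ‖ ≤ ε := by
  filter_upwards [Metric.tendstoUniformlyOn_iff.mp hG (|κ| * ε) (by positivity)] with k hk z hz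
  rw [norm_div, Complex.norm_real, Real.norm_eq_abs, div_le_iff₀' (abs_pos.mpr hκ),
    ← dist_eq_norm_sub']
  exact (hk z hz).le

theorem eventually_local_quotient_bound {ι : Type*} {l : Filter ι} {F G : ι → ℂ → ℂ}
    {F₀ G₀ : ℂ → ℂ} {x : ℂ} (hF : ∀ k, DifferentiableOn ℂ (F k) (ball 0 1))
    (hG : ∀ k, DifferentiableOn ℂ (G k) (ball 0 1)) (hF₀ : DifferentiableOn ℂ F₀ (ball 0 1))
    (hG₀ : DifferentiableOn ℂ G₀ (ball 0 1))
    (hFl : TendstoLocallyUniformlyOn F F₀ l (ball 0 1))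
    (hGl : TendstoLocallyUniformlyOn G G₀ l (ball 0 1)) (hne : (reNeZero G₀).Nonempty)
    (hFG : ∀ k, ∀ z ∈ ball (0 : ℂ) 1, (G k z).re = 0 → (F k z).re = 0)
    (hx : x ∈ ball (0 : ℂ) 1) :
    ∃ ρ > 0, ∃ C : ℝ, ∀ᶠ k in l, ∀ z ∈ ball x ρ, (G k z).re ≠ 0 →
      |(F k z).re / (G k z).re| ≤ C ∧
        ‖fderiv ℝ (fun w => (F k w).re / (G k w).re) z‖ ≤ C := by
  obtain ⟨n, e, he, q, hq, hscale⟩ := exists_rescaling_sub_close_pow hG₀ hne hx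
  obtain ⟨ε, hε, δ, ⟨hδ, hδ4⟩, C, hC⟩ := exists_isLocalQuotientBound n
  obtain ⟨s, hs_close, hs, hs_lt⟩ := ((hscale (ε / 2) (half_pos hε)).and (Ioo_mem_nhdsGT
    (show 0 < (1 - ‖x‖) / 4 by linarith [mem_ball_zero_iff.mp hx]))).exists
  have hσ : ‖s * e‖ = s := by rw [norm_mul, he, mul_one, Complex.norm_of_nonneg hs.le]
  have hσ0 : s * e ≠ 0 := norm_pos_iff.mp (hσ.symm ▸ hs)
  have hκ : q * s ^ n ≠ 0 := mul_ne_zero hq (pow_ne_zero n hs.ne')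
  have hK : closedBall x (s * 4) ⊆ ball 0 1 :=
    closedBall_subset_ball' (by rw [dist_zero_right]; linarith)
  have hUK : ball x (‖s * e‖ * 4) ⊆ closedBall x (s * 4) := by
    rw [hσ]
    exact ball_subset_closedBall
  have hKc : IsCompact (closedBall x (s * 4)) := isCompact_closedBall _ _
  have hFu := (tendstoLocallyUniformlyOn_iff_forall_isCompact isOpen_ball).mp hFl _ hK hKc
  have hGu := (tendstoLocallyUniformlyOn_iff_forall_isCompact isOpen_ball).mp hGl _ hK hKc
  obtain ⟨A, hA⟩ := hKc.exists_bound_of_continuousOn (hF₀.continuousOn.mono hK)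
  have hA0 : 0 ≤ A := (norm_nonneg _).trans (hA x (mem_closedBall_self (by positivity)))
  refine ⟨s * δ, by positivity, max (|(A + 1) / (q * s ^ n)| * C)
    (|(A + 1) / (q * s ^ n)| * (C / s)), ?_⟩
  filter_upwards [eventually_norm_le_add_one_of_tendstoUniformlyOn hFu hA,
    eventually_norm_sub_div_le_of_tendstoUniformlyOn hGu hκ (half_pos hε)] with k hFk hGk z hz hz0
  have hbound := hC.of_rescaling (x := x) (σ := s * e) (b := (G₀ x).im) (F := F k) (G := G k)
    (A := A + 1) hδ4 hσ0 hκ (by positivity) ((hF k).mono (hUK.trans hK))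
    ((hG k).mono (hUK.trans hK)) (fun w hw => hFk w (hUK hw)) (fun w hw => ?_)
    (fun w hw => hFG k w (hK (hUK hw)))
  · rw [hσ] at hbound
    exact (hbound z hz hz0).imp le_max_of_le_left le_max_of_le_right
  · calc ‖(G k (x + s * e * w) - (G₀ x).im * Complex.I) / (q * s ^ n : ℝ) - w ^ n‖
        = ‖(G k (x + s * e * w) - G₀ (x + s * e * w)) / (q * s ^ n : ℝ) +
          ((G₀ (x + s * e * w) - (G₀ x).im * Complex.I) / (q * s ^ n : ℝ) - w ^ n)‖ := by ring_nf
      _ ≤ ε / 2 + ε / 2 := (norm_add_le _ _).trans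
        (add_le_add (hGk _ (hUK (add_mul_mem_ball hσ0 hw))) (hs_close w hw))
      _ = ε := add_halves ε

end LocalQuotientConvergence

section Normalization

/-- The normalization selecting a compact class of holomorphic functions on the unit disc: `F`
takes almost every imaginary value at most `p` times, and is scaled and shifted by a real factor
and an imaginary constant so that `F 0` is real and `|re F|` has maximum `1` on the disc of
radius `1 / 2`. -/
structure IsNormalized (p : ℕ) (F : ℂ → ℂ) : Prop where
  differentiableOn : DifferentiableOn ℂ F (ball 0 1)
  hasFewImaginaryValues : HasFewImaginaryValues p F
  im_zero : (F 0).im = 0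
  abs_re_le_one : ∀ z ∈ closedBall (0 : ℂ) (1 / 2), |(F z).re| ≤ 1
  exists_abs_re_eq_one : ∃ z ∈ closedBall (0 : ℂ) (1 / 2), |(F z).re| = 1

variable {p : ℕ}

theorem closedBall_half_subset_ball_one : closedBall (0 : ℂ) (1 / 2) ⊆ ball 0 1 :=
  closedBall_subset_ball (by norm_num)

theorem exists_mem_ball_re_ne_zero {F : ℂ → ℂ} {r : ℝ} (hF : AnalyticOnNhd ℂ F (ball 0 1))
    (hr : 0 < r) (hr1 : r ≤ 1) (hne : (reNeZero F).Nonempty) :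
    ∃ z ∈ ball (0 : ℂ) r, (F z).re ≠ 0 := by
  by_contra! hzero
  obtain ⟨w, hw⟩ := (hF.mono (ball_subset_ball hr1)).eq_const_of_re_eq_const hzero isOpen_ball
    ((convex_ball 0 r).isConnected ⟨0, mem_ball_self hr⟩)
  have hconst : EqOn F (fun _ => w) (ball 0 1) :=
    hF.eqOn_of_preconnected_of_eventuallyEq analyticOnNhd_const
      (convex_ball (0 : ℂ) 1).isPreconnected (mem_ball_self one_pos)
      (eventually_of_mem (ball_mem_nhds 0 hr) hw)
  obtain ⟨z, hz, hz0⟩ := hne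
  rw [hconst hz, ← hw 0 (mem_ball_self hr)] at hz0
  exact hz0 (hzero 0 (mem_ball_self hr))

theorem exists_isNormalized {F : ℂ → ℂ} (hF : DifferentiableOn ℂ F (ball 0 1))
    (hp : HasFewImaginaryValues p F) (hne : (reNeZero F).Nonempty) :
    ∃ c > (0 : ℝ), ∃ F' : ℂ → ℂ, IsNormalized p F' ∧ ∀ z, (F' z).re = c * (F z).re := by
  obtain ⟨z₀, hz₀, hmax⟩ := (isCompact_closedBall (0 : ℂ) (1 / 2)).exists_isMaxOn
    ⟨0, mem_closedBall_self (by norm_num)⟩ (f := fun z => |(F z).re|)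
    (Complex.continuous_re.comp_continuousOn
      (hF.continuousOn.mono closedBall_half_subset_ball_one)).abs
  obtain ⟨z₁, hz₁, hz₁0⟩ := exists_mem_ball_re_ne_zero (hF.analyticOnNhd isOpen_ball)
    one_half_pos (by norm_num) hne
  have hpos : 0 < |(F z₀).re| :=
    (abs_pos.mpr hz₁0).trans_le (hmax (ball_subset_closedBall hz₁))
  set c : ℝ := |(F z₀).re|⁻¹ with hc
  have hc0 : 0 < c := inv_pos.mpr hpos
  have hre : ∀ z, ((c : ℂ) * F z + (-(c * (F 0).im) : ℝ) * Complex.I).re = c * (F z).re :=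
    fun z => by simp
  exact ⟨c, hc0, fun z => c * F z + (-(c * (F 0).im) : ℝ) * Complex.I,
    { differentiableOn := (hF.const_mul _).add_const _
      hasFewImaginaryValues := hp.ofReal_mul_add hc0.ne' _
      im_zero := by simp
      abs_re_le_one := fun z hz => by
        rw [hre, abs_mul, abs_of_pos hc0, hc, inv_mul_le_iff₀ hpos, mul_one]
        exact hmax hz
      exists_abs_re_eq_one := ⟨z₀, hz₀, by
        rw [hre, abs_mul, abs_of_pos hc0, hc, inv_mul_cancel₀ hpos.ne']⟩ }, hre⟩

theorem reNeZero_nonempty_of_tendstoUniformlyOn {ι : Type*} {F : ι → ℂ → ℂ} {F₀ : ℂ → ℂ}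
    {l : Filter ι} [l.NeBot] (hF : ∀ k, IsNormalized p (F k))
    (hFl : TendstoUniformlyOn F F₀ l (closedBall 0 (1 / 2))) : (reNeZero F₀).Nonempty := by
  obtain ⟨k, hk⟩ := (Metric.tendstoUniformlyOn_iff.mp hFl 1 one_pos).exists
  obtain ⟨z, hz, habs⟩ := (hF k).exists_abs_re_eq_one
  refine ⟨z, closedBall_half_subset_ball_one hz, fun hzero => ?_⟩
  have hdist := (Complex.abs_re_le_norm _).trans_lt (dist_eq_norm (F₀ z) _ ▸ hk z hz)
  rw [Complex.sub_re, hzero, zero_sub, abs_neg, habs] at hdist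
  exact hdist.false

theorem exists_tendsto_of_isNormalized {ι : Type*} (𝒰 : Ultrafilter ι) {F : ι → ℂ → ℂ}
    (hF : ∀ k, IsNormalized p (F k)) : ∃ F₀, DifferentiableOn ℂ F₀ (ball 0 1) ∧
      (reNeZero F₀).Nonempty ∧ TendstoLocallyUniformlyOn F F₀ 𝒰 (ball 0 1) := by
  obtain ⟨F₀, hF₀, hFl⟩ := exists_tendstoLocallyUniformlyOn_of_norm_le 𝒰 isOpen_ball
    (fun k => (hF k).differentiableOn) fun K hKD hK => by
      obtain ⟨R, hR, hKR⟩ := exists_pos_lt_subset_ball one_pos hK.isClosed hKD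
      obtain ⟨A, hA⟩ := exists_bound_of_abs_re_le_one p hR.1 hR.2
      exact ⟨A, fun k z hz => hA (F k) (hF k).differentiableOn (hF k).hasFewImaginaryValues
        (hF k).im_zero (hF k).abs_re_le_one z (ball_subset_closedBall (hKR hz))⟩
  exact ⟨F₀, hF₀, reNeZero_nonempty_of_tendstoUniformlyOn hF
    ((tendstoLocallyUniformlyOn_iff_forall_isCompact isOpen_ball).mp hFl _
      closedBall_half_subset_ball_one (isCompact_closedBall _ _)), hFl⟩

theorem exists_tendsto_of_forall_mem {ι X : Type*} [TopologicalSpace X] (𝒰 : Ultrafilter ι)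
    {K : Set X} (hK : IsCompact K) {t : ι → X} (ht : ∀ k, t k ∈ K) :
    ∃ s ∈ K, Tendsto t 𝒰 (𝓝 s) :=
  hK.ultrafilter_le_nhds (𝒰.map t) (le_principal_iff.mpr (mem_map.mpr (univ_mem' ht)))

theorem le_mul_mul_of_le_of_abs_inv_le {a C₁ C₂ q : ℝ} (ha0 : 0 ≤ a) (hq : q ≠ 0) (ha : a ≤ C₁)
    (hinv : |q⁻¹| ≤ C₂) : a ≤ C₁ * C₂ * |q| := by
  rw [abs_inv, inv_le_iff_one_le_mul₀ (abs_pos.mpr hq)] at hinv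
  rw [mul_assoc]
  exact ha.trans (le_mul_of_one_le_right (ha0.trans ha) hinv)

theorem exists_gradient_bound_of_isNormalized (p : ℕ) {K : Set ℂ} (hK : IsCompact K)
    (hKD : K ⊆ ball 0 1) : ∃ C > (0 : ℝ), ∀ F G : ℂ → ℂ, IsNormalized p F → IsNormalized p G →
      (∀ z ∈ ball (0 : ℂ) 1, (F z).re = 0 ↔ (G z).re = 0) →
      ∀ x ∈ K, (G x).re ≠ 0 → ∀ y ∈ K, (G y).re ≠ 0 →
        ‖fderiv ℝ (fun w => (F w).re / (G w).re) x‖ ≤ C * |(F y).re / (G y).re| := by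
  by_contra! hcon
  choose F G hF hG hFG x hx hx0 y hy hy0 hbad using
    fun k : ℕ => hcon (k + 1) (by positivity)
  set 𝒰 : Ultrafilter ℕ := hyperfilter ℕ
  obtain ⟨F₀, hF₀, hFne, hFl⟩ := exists_tendsto_of_isNormalized 𝒰 hF
  obtain ⟨G₀, hG₀, hGne, hGl⟩ := exists_tendsto_of_isNormalized 𝒰 hG
  obtain ⟨x', hx', hxlim⟩ := exists_tendsto_of_forall_mem 𝒰 hK hx
  obtain ⟨y', hy', hylim⟩ := exists_tendsto_of_forall_mem 𝒰 hK hy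
  obtain ⟨ρ₁, hρ₁, C₁, hbound_x⟩ := eventually_local_quotient_bound
    (fun k => (hF k).differentiableOn) (fun k => (hG k).differentiableOn) hF₀ hG₀ hFl hGl hGne
    (fun k z hz => (hFG k z hz).mpr) (hKD hx')
  obtain ⟨ρ₂, hρ₂, C₂, hbound_y⟩ := eventually_local_quotient_bound
    (fun k => (hG k).differentiableOn) (fun k => (hF k).differentiableOn) hG₀ hF₀ hGl hFl hFne
    (fun k z hz => (hFG k z hz).mp) (hKD hy')
  obtain ⟨n, hn⟩ := exists_nat_gt (C₁ * C₂)
  obtain ⟨k, hkx, hky, hxk, hyk, hnk⟩ := (hbound_x.and (hbound_y.and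
    ((hxlim.eventually (ball_mem_nhds x' hρ₁)).and ((hylim.eventually (ball_mem_nhds y' hρ₂)).and
      (Nat.hyperfilter_le_atTop (eventually_ge_atTop n)))))).exists
  have hFy0 : (F k (y k)).re ≠ 0 := mt (hFG k _ (hKD (hy k))).mp (hy0 k)
  have hgrad := (hkx _ hxk (hx0 k)).2
  have hinv : |((F k (y k)).re / (G k (y k)).re)⁻¹| ≤ C₂ := by
    rw [inv_div]
    exact (hky _ hyk hFy0).1
  refine (hbad k).not_ge ((le_mul_mul_of_le_of_abs_inv_le (norm_nonneg _)
    (div_ne_zero hFy0 (hy0 k)) hgrad hinv).trans ?_)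
  gcongr
  have hnk' : (n : ℝ) ≤ k := by exact_mod_cast hnk
  linarith

theorem exists_gradient_bound (p : ℕ) {K : Set ℂ} (hK : IsCompact K)
    (hKD : K ⊆ ball 0 1) : ∃ C > (0 : ℝ), ∀ F G : ℂ → ℂ,
      DifferentiableOn ℂ F (ball 0 1) → DifferentiableOn ℂ G (ball 0 1) →
      HasFewImaginaryValues p F → HasFewImaginaryValues p G →
      (reNeZero F).Nonempty → reNeZero F = reNeZero G →
      ∀ x ∈ K ∩ reNeZero F, ∀ y ∈ K ∩ reNeZero F,
        ‖fderiv ℝ (fun w => (F w).re / (G w).re) x‖ ≤ C * |(F y).re / (G y).re| := by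
  obtain ⟨C, hC0, hC⟩ := exists_gradient_bound_of_isNormalized p hK hKD
  refine ⟨C, hC0, fun F G hF hG hFp hGp hne hFG x hx y hy => ?_⟩
  obtain ⟨c, hc, F', hF', hcF⟩ := exists_isNormalized hF hFp hne
  obtain ⟨d, hd, G', hG', hdG⟩ := exists_isNormalized hG hGp (hFG ▸ hne)
  have hG'_ne : ∀ z ∈ reNeZero F, (G' z).re ≠ 0 := fun z hz => by
    rw [hdG]
    exact mul_ne_zero hd.ne' (hFG ▸ hz).2
  have hzeros : ∀ z ∈ ball (0 : ℂ) 1, (F' z).re = 0 ↔ (G' z).re = 0 := fun z hz => by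
    rw [hcF, hdG, mul_eq_zero_iff_left hc.ne', mul_eq_zero_iff_left hd.ne', ← not_iff_not]
    exact and_congr_right_iff.mp (Set.ext_iff.mp hFG z) hz
  have hquot : ∀ w, (F w).re / (G w).re = d / c * ((F' w).re / (G' w).re) := fun w => by
    rw [hcF, hdG]
    field
  have hxD : ball (0 : ℂ) 1 ∈ 𝓝 x := isOpen_ball.mem_nhds (hKD hx.1)
  have hdiff := differentiableAt_re_div_re (hF'.differentiableOn.differentiableAt hxD)
    (hG'.differentiableOn.differentiableAt hxD) (hG'_ne x hx.2)
  rw [funext hquot, hquot y, fderiv_const_mul hdiff, norm_smul, Real.norm_eq_abs, abs_mul]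
  calc |d / c| * ‖fderiv ℝ (fun w => (F' w).re / (G' w).re) x‖
      ≤ |d / c| * (C * |(F' y).re / (G' y).re|) := mul_le_mul_of_nonneg_left
        (hC F' G' hF' hG' hzeros x hx.1 (hG'_ne x hx.2) y hy.1 (hG'_ne y hy.2)) (abs_nonneg _)
    _ = C * (|d / c| * |(F' y).re / (G' y).re|) := mul_left_comm _ _ _

end Normalization

section Transfer

/-- The coordinate isometry between the complex plane and `ℝ²`, along which harmonic functions on
the plane are compared with real parts of holomorphic functions. -/
def complexIsometryEn : ℂ ≃ₗᵢ[ℝ] En 2 := Complex.orthonormalBasisOneI.repr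

variable {u v : En 2 → ℝ} {F G : ℂ → ℂ} {z : ℂ}

theorem complexIsometryEn_mem_ball {r : ℝ} :
    complexIsometryEn z ∈ ball (0 : En 2) r ↔ z ∈ ball (0 : ℂ) r := by
  rw [mem_ball_zero_iff, mem_ball_zero_iff, LinearIsometryEquiv.norm_map]

theorem laplacian_comp_complexIsometryEn (u : En 2 → ℝ) (z : ℂ) :
    Laplacian.laplacian (u ∘ complexIsometryEn) z = laplacianAt u (complexIsometryEn z) := by
  rw [InnerProductSpace.laplacian_eq_iteratedFDeriv_orthonormalBasis _
    Complex.orthonormalBasisOneI]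
  refine Finset.sum_congr rfl fun i _ => ?_
  have hcomp := complexIsometryEn.toContinuousLinearEquiv.iteratedFDerivWithin_comp_right u
    uniqueDiffOn_univ (mem_univ (complexIsometryEn z)) 2
  simp only [preimage_univ, iteratedFDerivWithin_univ] at hcomp
  change iteratedFDeriv ℝ 2 (u ∘ complexIsometryEn.toContinuousLinearEquiv) z _ = _
  rw [hcomp, ContinuousMultilinearMap.compContinuousLinearMap_apply]
  have hbasis : complexIsometryEn (Complex.orthonormalBasisOneI i) = EuclideanSpace.single i 1 :=
    Complex.orthonormalBasisOneI.repr_self i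
  congr 1
  funext j
  fin_cases j <;> exact hbasis

theorem HarmonicOnSet.exists_analyticOnNhd_re_eq (hu : HarmonicOnSet u (ball 0 1)) :
    ∃ F : ℂ → ℂ, AnalyticOnNhd ℂ F (ball 0 1) ∧
      ∀ z ∈ ball (0 : ℂ) 1, (F z).re = u (complexIsometryEn z) := by
  refine InnerProductSpace.HarmonicOnNhd.exists_analyticOnNhd_ball_re_eq
    (f := u ∘ complexIsometryEn) fun z hz => ⟨?_, ?_⟩
  · exact (hu.1.contDiffAt (isOpen_ball.mem_nhds (complexIsometryEn_mem_ball.mpr hz))).comp z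
      complexIsometryEn.contDiff.contDiffAt
  · filter_upwards [isOpen_ball.mem_nhds hz] with w hw
    rw [laplacian_comp_complexIsometryEn]
    exact hu.2 _ (complexIsometryEn_mem_ball.mpr hw)

theorem reNeZero_eq_preimage (hFu : ∀ z ∈ ball (0 : ℂ) 1, (F z).re = u (complexIsometryEn z)) :
    reNeZero F = complexIsometryEn ⁻¹' (ball 0 1 \ zeroSet u (ball 0 1)) := by
  ext z
  rw [mem_preimage, Set.mem_sdiff, complexIsometryEn_mem_ball]
  refine and_congr_right fun hz => ?_
  rw [hFu z hz, zeroSet, Set.mem_ofPred_eq, not_and,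
    forall_prop_of_true (complexIsometryEn_mem_ball.mpr hz)]

theorem encard_components_le_nodalComponents
    (hFu : ∀ z ∈ ball (0 : ℂ) 1, (F z).re = u (complexIsometryEn z)) :
    (componentsIn (reNeZero F)).encard ≤ (nodalComponents u (ball 0 1)).encard := by
  refine encard_le_encard_of_injOn (f := fun C => complexIsometryEn '' C) ?_
    complexIsometryEn.injective.image_injective.injOn
  rintro C ⟨z, hz, rfl⟩
  have himage : complexIsometryEn '' reNeZero F = ball 0 1 \ zeroSet u (ball 0 1) := by
    rw [reNeZero_eq_preimage hFu, image_preimage_eq _ complexIsometryEn.surjective]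
  refine ⟨complexIsometryEn z, himage ▸ mem_image_of_mem _ hz, ?_⟩
  rw [← himage]
  exact complexIsometryEn.toHomeomorph.image_connectedComponentIn hz

theorem HarmonicOnSet.exists_hasFewImaginaryValues {N : ℕ} (hu : HarmonicOnSet u (ball 0 1))
    (hne : ∃ x ∈ ball (0 : En 2) 1, u x ≠ 0) (hN : (nodalComponents u (ball 0 1)).encard ≤ N) :
    ∃ F : ℂ → ℂ, DifferentiableOn ℂ F (ball 0 1) ∧ HasFewImaginaryValues (N * N) F ∧
      (reNeZero F).Nonempty ∧ ∀ z ∈ ball (0 : ℂ) 1, (F z).re = u (complexIsometryEn z) := by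
  obtain ⟨F, hF, hFu⟩ := hu.exists_analyticOnNhd_re_eq
  obtain ⟨x, hx, hx0⟩ := hne
  obtain ⟨z, rfl⟩ := complexIsometryEn.surjective x
  have hFne : (reNeZero F).Nonempty := ⟨z, by
    rw [reNeZero_eq_preimage hFu]
    exact ⟨hx, fun h => hx0 h.2⟩⟩
  exact ⟨F, hF.differentiableOn, hasFewImaginaryValues_of_encard_components_le hF hFne
    ((encard_components_le_nodalComponents hFu).trans hN), hFne, hFu⟩

theorem norm_gradient_eq_norm_fderiv_comp (f : En 2 → ℝ) (z : ℂ) :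
    ‖gradient f (complexIsometryEn z)‖ = ‖fderiv ℝ (f ∘ complexIsometryEn) z‖ := by
  rw [gradient, LinearIsometryEquiv.norm_map, ← norm_iteratedFDeriv_one (𝕜 := ℝ),
    ← norm_iteratedFDeriv_one (𝕜 := ℝ), LinearIsometryEquiv.norm_iteratedFDeriv_comp_right]

theorem norm_gradient_div_eq (hFu : ∀ z ∈ ball (0 : ℂ) 1, (F z).re = u (complexIsometryEn z))
    (hGv : ∀ z ∈ ball (0 : ℂ) 1, (G z).re = v (complexIsometryEn z))
    (hz : z ∈ ball (0 : ℂ) 1) :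
    ‖gradient (fun x => u x / v x) (complexIsometryEn z)‖ =
      ‖fderiv ℝ (fun w => (F w).re / (G w).re) z‖ := by
  have heq : (fun x => u x / v x) ∘ complexIsometryEn =ᶠ[𝓝 z] fun w => (F w).re / (G w).re := by
    filter_upwards [isOpen_ball.mem_nhds hz] with w hw
    rw [hFu w hw, hGv w hw, Function.comp_apply]
  rw [norm_gradient_eq_norm_fderiv_comp, heq.fderiv_eq]

end Transfer

theorem stmt1 (N : ℕ) (K : Set (En 2)) (hK : IsCompact K) (hKD : K ⊆ ball (0 : En 2) 1) :
    ∃ C₂ > (0 : ℝ), ∀ u v : En 2 → ℝ,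
      HarmonicOnSet u (ball 0 1) → HarmonicOnSet v (ball 0 1) →
      (∃ x ∈ ball (0 : En 2) 1, u x ≠ 0) → (∃ x ∈ ball (0 : En 2) 1, v x ≠ 0) →
      zeroSet u (ball 0 1) = zeroSet v (ball 0 1) →
      (nodalComponents u (ball 0 1)).Finite →
      (nodalComponents u (ball 0 1)).ncard < N →
      ∀ x ∈ K \ zeroSet u (ball 0 1), ∀ y ∈ K \ zeroSet u (ball 0 1),
        ‖gradient (fun z => u z / v z) x‖ ≤ C₂ * |u y / v y| := by
  obtain ⟨C, hC0, hC⟩ := exists_gradient_bound (N * N) (K := complexIsometryEn ⁻¹' K)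
    (complexIsometryEn.toHomeomorph.isCompact_preimage.mpr hK)
    fun z hz => complexIsometryEn_mem_ball.mp (hKD hz)
  refine ⟨C, hC0, fun u v hu hv hune hvne huv hfin hcard x hx y hy => ?_⟩
  have hN : (nodalComponents u (ball 0 1)).encard ≤ N := by
    rw [← hfin.cast_ncard_eq]
    exact_mod_cast hcard.le
  obtain ⟨F, hF, hFp, hFne, hFu⟩ := hu.exists_hasFewImaginaryValues hune hN
  obtain ⟨G, hG, hGp, -, hGv⟩ := hv.exists_hasFewImaginaryValues hvne (N := N) (by
    rwa [nodalComponents, ← huv])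
  have hFG : reNeZero F = reNeZero G := by
    rw [reNeZero_eq_preimage hFu, reNeZero_eq_preimage hGv, huv]
  obtain ⟨x, rfl⟩ := complexIsometryEn.surjective x
  obtain ⟨y, rfl⟩ := complexIsometryEn.surjective y
  have hmem : ∀ z, complexIsometryEn z ∈ K \ zeroSet u (ball 0 1) →
      z ∈ complexIsometryEn ⁻¹' K ∩ reNeZero F := fun z hz => by
    rw [reNeZero_eq_preimage hFu]
    exact ⟨hz.1, hKD hz.1, hz.2⟩
  have hbound := hC F G hF hG hFp hGp hFne hFG x (hmem x hx) y (hmem y hy)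
  rwa [← norm_gradient_div_eq hFu hGv (hmem x hx).2.1, hFu y (hmem y hy).2.1,
    hGv y (hmem y hy).2.1] at hbound
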